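/- Let γ : [a,b] → ℝ³ be a minimal inspection curve parametrized with constant speed. Then its unfolding γ̃ : [a,b] → ℝ² is locally convex with respect to the origin o. -/

import Mathlib

open MeasureTheory Set Real
open scoped ENNReal NNReal RealInnerProductSpace

noncomputable section

abbrev E3 := EuclideanSpace ℝ (Fin 3)
abbrev E2 := EuclideanSpace ℝ (Fin 2)

/-- A closed rectifiable curve on `[a,b]` whose convex hull contains the unit sphere. -/
def IsInspection (a b : ℝ) (γ : ℝ → E3) : Prop :=
  a < b ∧ ContinuousOn γ (Set.Icc a b) ∧ γ a = γ b ∧ eVariationOn γ (Set.Icc a b) ≠ ⊤ ∧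
    Metric.sphere (0 : E3) 1 ⊆ convexHull ℝ (γ '' Set.Icc a b)

/-- A minimal inspection curve: an inspection curve of least length. -/
def IsMinimalInspection (a b : ℝ) (γ : ℝ → E3) : Prop :=
  IsInspection a b γ ∧
    ∀ (c d : ℝ) (β : ℝ → E3), IsInspection c d β →
      eVariationOn γ (Set.Icc a b) ≤ eVariationOn β (Set.Icc c d)

/-- The arclength of the radial (spherical) projection `γ/|γ|` over `[a,t]`. -/
def sphericalArc (a : ℝ) (γ : ℝ → E3) (t : ℝ) : ℝ :=
  (eVariationOn (fun s => ‖γ s‖⁻¹ • γ s) (Set.Icc a t)).toReal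

/-- The (cone) unfolding of a space curve: the planar curve with the same height and
the spherical arclength as polar angle. -/
def unfolding (a : ℝ) (γ : ℝ → E3) (t : ℝ) : E2 :=
  ‖γ t‖ • (WithLp.equiv 2 (Fin 2 → ℝ)).symm
    ![Real.cos (sphericalArc a γ t), Real.sin (sphericalArc a γ t)]

/-- A planar curve is locally convex with respect to the origin if it is locally
one-to-one, locally lies on boundaries of convex bodies, and through each of its points
there passes a local support line not through the origin such that locally the curve lies
in the closed half-plane bounded by that line which contains the origin. -/
def IsLocallyConvexWrtO (a b : ℝ) (β : ℝ → E2) : Prop :=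
  (∀ t ∈ Set.Icc a b, ∃ U ∈ nhdsWithin t (Set.Icc a b), Set.InjOn β U) ∧
  (∀ t ∈ Set.Icc a b, ∃ U ∈ nhdsWithin t (Set.Icc a b), ∃ K : Set E2,
    Convex ℝ K ∧ IsCompact K ∧ (interior K).Nonempty ∧ β '' U ⊆ frontier K) ∧
  (∀ t ∈ Set.Icc a b, ∃ u : E2, ∃ c : ℝ, 0 < c ∧ ⟪u, β t⟫ = c ∧
    ∃ U ∈ nhdsWithin t (Set.Icc a b), ∀ s ∈ U, ⟪u, β s⟫ ≤ c)



theorem local_to_global {E : Type*} [PseudoMetricSpace E] {f : ℝ → E} {P : ℝ → ℝ} {s u δ : ℝ}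
    (hδ : 0 < δ)
    (h : ∀ x y, s ≤ x → x ≤ y → y ≤ u → y - x ≤ δ → dist (f x) (f y) ≤ P y - P x) :
    ∀ x y, s ≤ x → x ≤ y → y ≤ u → dist (f x) (f y) ≤ P y - P x := by
  have key : ∀ n : ℕ, ∀ x y, s ≤ x → x ≤ y → y ≤ u → y - x ≤ (n + 1) * δ →
      dist (f x) (f y) ≤ P y - P x := by
    intro n
    induction n with
    | zero => intro x y h1 h2 h3 h4; exact h x y h1 h2 h3 (by simpa using h4)
    | succ n ih =>
      intro x y h1 h2 h3 h4
      push_cast at h4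
      by_cases hc : y - x ≤ δ
      · exact h x y h1 h2 h3 hc
      · push Not at hc
        have a1 := h x (x + δ) h1 (by linarith) (by linarith) (by linarith)
        have a2 := ih (x + δ) y (by linarith) (by linarith) h3 (by linarith)
        have := dist_triangle (f x) (f (x + δ)) (f y)
        linarith
  intro x y h1 h2 h3
  obtain ⟨n, hn⟩ := exists_nat_ge ((y - x) / δ)
  refine key n x y h1 h2 h3 ?_
  rw [div_le_iff₀ hδ] at hn
  linarith

theorem eVar_le_of_dist {E : Type*} [PseudoMetricSpace E] {f : ℝ → E} {P : ℝ → ℝ} {s u : ℝ}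
    (hsu : s ≤ u)
    (h : ∀ x y, s ≤ x → x ≤ y → y ≤ u → dist (f x) (f y) ≤ P y - P x) :
    eVariationOn f (Icc s u) ≤ ENNReal.ofReal (P u - P s) := by
  have hm : MonotoneOn P (Icc s u) := by
    intro x hx y hy hxy
    have := h x y hx.1 hxy hy.2
    have := dist_nonneg (x := f x) (y := f y)
    linarith
  have h1 : eVariationOn P (Icc s u) ≤ ENNReal.ofReal (P u - P s) := by
    have := hm.eVariationOn_eq (left_mem_Icc.2 hsu) (right_mem_Icc.2 hsu)
    simpa using this.le
  refine le_trans ?_ h1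
  unfold eVariationOn
  refine iSup_mono fun p => Finset.sum_le_sum fun i _ => ?_
  have hp1 := p.2.2.2 i
  have hp2 := p.2.2.2 (i+1)
  have hle : p.2.1 i ≤ p.2.1 (i+1) := p.2.2.1 (Nat.le_succ i)
  rw [edist_comm, edist_dist, edist_dist]
  apply ENNReal.ofReal_le_ofReal
  rw [Real.dist_eq]
  exact (h _ _ hp1.1 hle hp2.2).trans (le_abs_self _)

theorem isCompact_hull3 {S : Set E3} (hS : IsCompact S) : IsCompact (convexHull ℝ S) := by
  rcases S.eq_empty_or_nonempty with rfl | ⟨x0, hx0⟩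
  · simp
  have hK : IsCompact ((stdSimplex ℝ (Fin 4)) ×ˢ (Set.pi univ (fun _ : Fin 4 => S))) :=
    (isCompact_stdSimplex ℝ _).prod (isCompact_univ_pi fun _ => hS)
  have hcont : Continuous (fun q : (Fin 4 → ℝ) × (Fin 4 → E3) => ∑ i, q.1 i • q.2 i) := by
    fun_prop
  convert hK.image hcont using 1
  ext x
  constructor
  · intro hx
    obtain ⟨ι, _, z, w, hz, hind, hw, hw1, hwx⟩ := eq_pos_convex_span_of_mem_convexHull hx
    have hcard : Fintype.card ι ≤ Fintype.card (Fin 4) := by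
      have h1 := hind.card_le_finrank_succ
      have h2 : Module.finrank ℝ (vectorSpan ℝ (Set.range z)) ≤ Module.finrank ℝ E3 :=
        Submodule.finrank_le _
      simp at h2 ⊢
      omega
    obtain ⟨e⟩ := Function.Embedding.nonempty_of_card_le hcard
    refine ⟨(fun j => Function.extend e w 0 j, fun j => Function.extend e z (fun _ => x0) j),
      ⟨⟨fun j => ?_, ?_⟩, fun j _ => ?_⟩, ?_⟩
    · by_cases hj : ∃ i, e i = j
      · obtain ⟨i, rfl⟩ := hj
        simp only [e.injective.extend_apply]; exact (hw i).le
      · simp [Function.extend_apply' _ _ _ hj]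
    · rw [← hw1]
      symm
      refine Fintype.sum_of_injective e e.injective _ _ ?_ ?_
      · intro j hj
        exact Function.extend_apply' _ _ _ (by simpa using hj)
      · intro i; simp [e.injective.extend_apply]
    · by_cases hj : ∃ i, e i = j
      · obtain ⟨i, rfl⟩ := hj
        simp only [e.injective.extend_apply]; exact hz ⟨i, rfl⟩
      · simp only [Function.extend_apply' _ _ _ hj]; exact hx0
    · rw [← hwx]
      symm
      refine Fintype.sum_of_injective e e.injective _ _ ?_ ?_
      · intro j hj
        simp [Function.extend_apply' w _ _ (by simpa using hj : ¬ ∃ i, e i = j)]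
      · intro i; simp [e.injective.extend_apply]
  · rintro ⟨⟨w, z⟩, ⟨hw, hz⟩, rfl⟩
    refine (convex_convexHull ℝ S).sum_mem (fun i _ => hw.1 i) hw.2 fun i _ => ?_
    exact subset_convexHull ℝ S (hz i (mem_univ _))

theorem hull_of_support {S : Set E3} (hS : IsCompact S)
    (h : ∀ y : E3, ‖y‖ = 1 → ∃ x ∈ S, 1 ≤ ⟪x, y⟫) :
    Metric.sphere (0 : E3) 1 ⊆ convexHull ℝ S := by
  intro z hz
  by_contra hn
  have hz1 : ‖z‖ = 1 := by simpa using hz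
  obtain ⟨f, u, hf1, hf2⟩ := geometric_hahn_banach_closed_point (convex_convexHull ℝ S)
    (isCompact_hull3 hS).isClosed hn
  set w : E3 := (InnerProductSpace.toDual ℝ E3).symm f with hw
  have hfw : ∀ x, f x = ⟪w, x⟫ := by
    intro x; rw [hw, InnerProductSpace.toDual_symm_apply]
  have hw0 : w ≠ 0 := by
    intro h0
    obtain ⟨x, hx, -⟩ := h z hz1
    have := hf1 x (subset_convexHull ℝ S hx)
    rw [hfw, h0] at this hf2
    simp at this hf2
    linarith
  have hwn : 0 < ‖w‖ := norm_pos_iff.2 hw0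
  obtain ⟨x, hx, hx1⟩ := h (‖w‖⁻¹ • w) (by rw [norm_smul, norm_inv, norm_norm]; field_simp)
  have h1 := hf1 x (subset_convexHull ℝ S hx)
  rw [hfw] at h1 hf2
  rw [inner_smul_right, real_inner_comm] at hx1
  have h2 : ⟪w, z⟫ ≤ ‖w‖ := by
    have := real_inner_le_norm w z
    rwa [hz1, mul_one] at this
  have h3 : ‖w‖ ≤ ⟪w, x⟫ := by
    have := mul_le_mul_of_nonneg_left hx1 hwn.le
    rwa [mul_one, mul_inv_cancel_left₀ hwn.ne'] at this
  linarith

theorem support_of_hull {S : Set E3} (h : Metric.sphere (0 : E3) 1 ⊆ convexHull ℝ S)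
    {y : E3} (hy : ‖y‖ = 1) : ∃ x ∈ S, 1 ≤ ⟪x, y⟫ := by
  by_contra hn
  push Not at hn
  have hc : Convex ℝ {x : E3 | ⟪x, y⟫ < 1} := by
    intro p hp q hq a b ha hb hab
    simp only [mem_ofPred_eq] at *
    rw [inner_add_left, inner_smul_left, inner_smul_left]
    simp only [conj_trivial]
    rcases ha.eq_or_lt with h0 | h0
    · subst h0
      have : b = 1 := by linarith
      subst this; simpa using hq
    · nlinarith
  have h1 : convexHull ℝ S ⊆ {x : E3 | ⟪x, y⟫ < 1} := convexHull_min hn hc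
  have := h1 (h (by simpa using hy))
  simp only [mem_ofPred_eq, real_inner_self_eq_norm_sq, hy] at this
  norm_num at this

/-- Arclength parametrised periodic minimal inspection curve. -/
structure Good (Γ : ℝ → E3) (L : ℝ) : Prop where
  pos : 0 < L
  per : ∀ t, Γ (t + L) = Γ t
  lip : LipschitzWith 1 Γ
  hull : ∀ y : E3, ‖y‖ = 1 → ∃ t, 1 ≤ ⟪Γ t, y⟫
  minim : ∀ (c d : ℝ) (β : ℝ → E3), IsInspection c d β →
    ENNReal.ofReal L ≤ eVariationOn β (Icc c d)

namespace Good

variable {Γ : ℝ → E3} {L : ℝ}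

theorem shift (h : Good Γ L) (c : ℝ) : Good (fun t => Γ (t + c)) L where
  pos := h.pos
  per t := by
    have := h.per (t + c)
    rw [← this]; congr 1; ring
  lip := by
    refine LipschitzWith.of_dist_le_mul fun x y => ?_
    have := h.lip.dist_le_mul (x + c) (y + c)
    simpa using this
  hull y hy := by
    obtain ⟨t, ht⟩ := h.hull y hy
    exact ⟨t - c, by simpa using ht⟩
  minim := h.minim

theorem rev (h : Good Γ L) : Good (fun t => Γ (-t)) L where
  pos := h.pos
  per t := by
    have := h.per (-t - L)
    rw [sub_add_cancel] at this
    rw [this]; congr 1; ring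
  lip := by
    refine LipschitzWith.of_dist_le_mul fun x y => ?_
    have := h.lip.dist_le_mul (-x) (-y)
    simpa using this
  hull y hy := by
    obtain ⟨t, ht⟩ := h.hull y hy
    exact ⟨-t, by simpa using ht⟩
  minim := h.minim

theorem dist_le (h : Good Γ L) (x y : ℝ) (hxy : x ≤ y) : dist (Γ x) (Γ y) ≤ y - x := by
  have := h.lip.dist_le_mul x y
  rw [Real.dist_eq, abs_sub_comm, abs_of_nonneg (by linarith)] at this
  simpa using this

theorem window (h : Good Γ L) (s t : ℝ) : ∃ t' ∈ Ico s (s + L), Γ t' = Γ t := by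
  refine ⟨toIcoMod h.pos s t, toIcoMod_mem_Ico h.pos s t, ?_⟩
  have hp : Function.Periodic Γ L := h.per
  rw [toIcoMod]
  exact hp.sub_zsmul_eq _

theorem rival (h : Good Γ L) {s u : ℝ} (hsu : s ≤ u) (hu : u ≤ s + L) {β : ℝ → E3}
    (hc : ContinuousOn β (Icc s u))
    (hb : ∀ t ∈ Icc s u, ∃ l : ℝ, 1 ≤ l ∧ β t = l • Γ t)
    (hs : β s = Γ s) (hu' : β u = Γ u) :
    ENNReal.ofReal (u - s) ≤ eVariationOn β (Icc s u) := by
  by_cases hfin : eVariationOn β (Icc s u) = ⊤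
  · rw [hfin]; exact le_top
  set B : ℝ → E3 := fun t => if t ≤ u then β t else Γ t with hB
  have hB1 : EqOn B β (Icc s u) := fun t ht => by simp [hB, ht.2]
  have hB2 : EqOn B Γ (Icc u (s + L)) := fun t ht => by
    by_cases h1 : t ≤ u
    · have : t = u := le_antisymm h1 ht.1
      subst this; simp [hB, hu']
    · simp [hB, h1]
  have hv1 : eVariationOn B (Icc s u) = eVariationOn β (Icc s u) := eVariationOn.eq_of_eqOn hB1
  have hv2 : eVariationOn B (Icc u (s + L)) ≤ ENNReal.ofReal (s + L - u) := by
    rw [eVariationOn.eq_of_eqOn hB2]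
    have := eVar_le_of_dist (f := Γ) (P := fun t => t) hu (fun x y _ hxy _ => h.dist_le x y hxy)
    simpa using this
  have hadd : eVariationOn B (Icc s (s + L)) =
      eVariationOn B (Icc s u) + eVariationOn B (Icc u (s + L)) := by
    have := eVariationOn.Icc_add_Icc B (s := univ) hsu hu (mem_univ _)
    simpa using this.symm
  have hBc : ContinuousOn B (Icc s (s + L)) := by
    rw [← Icc_union_Icc_eq_Icc hsu hu]
    exact (hc.congr hB1).union_of_isClosed (h.lip.continuous.continuousOn.congr hB2)
      isClosed_Icc isClosed_Icc
  have hIns : IsInspection s (s + L) B := by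
    refine ⟨by linarith [h.pos], hBc, ?_, ?_, ?_⟩
    · rw [hB1 (left_mem_Icc.2 hsu), hB2 (right_mem_Icc.2 hu), hs, h.per]
    · rw [hadd, hv1]
      exact ENNReal.add_ne_top.2 ⟨hfin, ne_top_of_le_ne_top ENNReal.ofReal_ne_top hv2⟩
    · apply hull_of_support (isCompact_Icc.image_of_continuousOn hBc)
      intro y hy
      obtain ⟨t0, ht0⟩ := h.hull y hy
      obtain ⟨t, ht, hte⟩ := h.window s t0
      rw [← hte] at ht0
      refine ⟨B t, ⟨t, Ico_subset_Icc_self ht, rfl⟩, ?_⟩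
      by_cases h1 : t ≤ u
      · rw [hB1 ⟨ht.1, h1⟩]
        obtain ⟨l, hl, hbl⟩ := hb t ⟨ht.1, h1⟩
        rw [hbl, inner_smul_left]
        simp only [conj_trivial]
        nlinarith
      · rw [hB2 ⟨(not_le.1 h1).le, ht.2.le⟩]; exact ht0
  have hm := h.minim _ _ _ hIns
  rw [hadd, hv1] at hm
  have h3 : ENNReal.ofReal L = ENNReal.ofReal (u - s) + ENNReal.ofReal (s + L - u) := by
    rw [← ENNReal.ofReal_add (by linarith) (by linarith)]; congr 1; ring
  rw [h3] at hm
  have h4 := hm.trans (add_le_add_right hv2 _)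
  exact (ENNReal.add_le_add_iff_right ENNReal.ofReal_ne_top).1 h4

/-- Rival lemma with explicit length bound. -/
theorem rival_le (h : Good Γ L) {s u : ℝ} (hsu : s ≤ u) (hu : u ≤ s + L) {β : ℝ → E3}
    (hc : ContinuousOn β (Icc s u))
    (hb : ∀ t ∈ Icc s u, ∃ l : ℝ, 1 ≤ l ∧ β t = l • Γ t)
    (hs : β s = Γ s) (hu' : β u = Γ u) {V : ℝ} (hV0 : 0 ≤ V)
    (hV : eVariationOn β (Icc s u) ≤ ENNReal.ofReal V) : u - s ≤ V := by
  have := (h.rival hsu hu hc hb hs hu').trans hV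
  exact (ENNReal.ofReal_le_ofReal_iff hV0).1 this

end Good


def ballX (t : ℝ) : ℝ := - cos (max π (min t (2*π))) + (cos (max (3*π) t) + 1)
def ballY (t : ℝ) : ℝ := cos (min t π) + (1 - cos (max (2*π) (min t (3*π))))
def ballB (t : ℝ) : E3 := !₂[ballX t, ballY t, sin t]

theorem cos_two_pi' : cos (2*π) = 1 := cos_two_pi
theorem cos_three_pi' : cos (3*π) = -1 := by
  rw [show 3*π = π + 2*π by ring, cos_add_two_pi, cos_pi]

theorem ball1 {t : ℝ} (h : t ∈ Icc 0 π) : ballX t = 1 ∧ ballY t = cos t := by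
  obtain ⟨h1, h2⟩ := h
  have := pi_pos
  constructor
  · rw [ballX, min_eq_left (by linarith), max_eq_left (by linarith), max_eq_left (by linarith),
      cos_three_pi', cos_pi]; norm_num
  · rw [ballY, min_eq_left (by linarith), min_eq_left (by linarith), max_eq_left (by linarith),
      cos_two_pi']; norm_num

theorem ball2 {t : ℝ} (h : t ∈ Icc π (2*π)) : ballX t = -cos t ∧ ballY t = -1 := by
  obtain ⟨h1, h2⟩ := h
  have := pi_pos
  constructor
  · rw [ballX, min_eq_left (by linarith), max_eq_right (by linarith), max_eq_left (by linarith),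
      cos_three_pi']; norm_num
  · rw [ballY, min_eq_right (by linarith), min_eq_left (by linarith), max_eq_left (by linarith),
      cos_two_pi', cos_pi]; norm_num

theorem ball3 {t : ℝ} (h : t ∈ Icc (2*π) (3*π)) : ballX t = -1 ∧ ballY t = -cos t := by
  obtain ⟨h1, h2⟩ := h
  have := pi_pos
  constructor
  · rw [ballX, min_eq_right (by linarith), max_eq_right (by linarith), max_eq_left (by linarith),
      cos_three_pi', cos_two_pi']; norm_num
  · rw [ballY, min_eq_right (by linarith), min_eq_left (by linarith), max_eq_right (by linarith),
      cos_pi]; ring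

theorem ball4 {t : ℝ} (h : t ∈ Icc (3*π) (4*π)) : ballX t = cos t ∧ ballY t = 1 := by
  obtain ⟨h1, h2⟩ := h
  have := pi_pos
  constructor
  · rw [ballX, min_eq_right (by linarith), max_eq_right (by linarith), max_eq_right (by linarith),
      cos_two_pi']; ring
  · rw [ballY, min_eq_right (by linarith), min_eq_right (by linarith), max_eq_right (by linarith),
      cos_pi, cos_three_pi']; norm_num

theorem ball_dist {x y : ℝ} (hxy : x ≤ y)
    (h : (ballX x - ballX y)^2 + (ballY x - ballY y)^2 ≤ (cos x - cos y)^2) :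
    dist (ballB x) (ballB y) ≤ y - x := by
  rw [EuclideanSpace.dist_eq, Fin.sum_univ_three]
  apply Real.sqrt_le_iff.2 ⟨by linarith, ?_⟩
  simp only [ballB, Real.dist_eq, sq_abs]
  simp
  have h1 := Real.one_sub_sq_div_two_le_cos (x := y - x)
  rw [cos_sub] at h1
  have h2 := sin_sq_add_cos_sq x
  have h3 := sin_sq_add_cos_sq y
  nlinarith

theorem ball_piece {s u : ℝ} (hsu : s ≤ u)
    (h : ∀ x ∈ Icc s u, ∀ y ∈ Icc s u,
      (ballX x - ballX y)^2 + (ballY x - ballY y)^2 ≤ (cos x - cos y)^2) :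
    eVariationOn ballB (Icc s u) ≤ ENNReal.ofReal (u - s) :=
  eVar_le_of_dist (P := fun t => t) hsu fun x y h1 h2 h3 =>
    ball_dist h2 (h x ⟨h1, h2.trans h3⟩ y ⟨h1.trans h2, h3⟩)

theorem exists_angle (p q : ℝ) (hq : 0 ≤ q) :
    ∃ φ ∈ Icc 0 π, p * cos φ + q * sin φ = √(p^2+q^2) := by
  by_cases h0 : p^2+q^2 = 0
  · refine ⟨0, ⟨le_rfl, pi_pos.le⟩, ?_⟩
    have hp : p = 0 := by nlinarith [sq_nonneg p, sq_nonneg q]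
    rw [h0]; simp [hp]
  have hpos : 0 < p^2+q^2 := lt_of_le_of_ne (by positivity) (Ne.symm h0)
  set ρ := √(p^2+q^2) with hρ
  have hρ0 : 0 < ρ := Real.sqrt_pos.2 hpos
  have hρ2 : ρ^2 = p^2+q^2 := Real.sq_sqrt hpos.le
  have habs : |p| ≤ ρ := Real.abs_le_sqrt (by nlinarith)
  rw [abs_le] at habs
  refine ⟨arccos (p/ρ), ⟨arccos_nonneg _, arccos_le_pi _⟩, ?_⟩
  rw [cos_arccos (by rw [le_div_iff₀ hρ0]; linarith) (by rw [div_le_iff₀ hρ0]; linarith),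
    sin_arccos]
  have : 1 - (p/ρ)^2 = (q/ρ)^2 := by field_simp; linarith
  rw [this, Real.sqrt_sq (by positivity)]
  field_simp; linarith

theorem one_le_add_sqrt {z w : ℝ} (hz : 0 ≤ z) (hw : 0 ≤ w) (h : z^2 + w = 1) : 1 ≤ z + √w := by
  have h1 := Real.sq_sqrt hw
  have h2 := Real.sqrt_nonneg w
  nlinarith

theorem ball_inner (t : ℝ) (y : E3) :
    ⟪ballB t, y⟫ = ballX t * y 0 + ballY t * y 1 + sin t * y 2 := by
  simp [ballB, PiLp.inner_apply, Fin.sum_univ_three]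
  ring

theorem ball_support (y : E3) (hy : ‖y‖ = 1) : ∃ x ∈ ballB '' Icc 0 (4*π), 1 ≤ ⟪x, y⟫ := by
  have hn : y 0 ^ 2 + y 1 ^ 2 + y 2 ^ 2 = 1 := by
    have := EuclideanSpace.norm_sq_eq y
    rw [hy, Fin.sum_univ_three] at this
    simp at this; linarith
  have hpi := pi_pos
  suffices ∃ t ∈ Icc 0 (4*π), 1 ≤ ⟪ballB t, y⟫ by
    obtain ⟨t, ht, h⟩ := this
    exact ⟨_, ⟨t, ht, rfl⟩, h⟩
  by_cases h2 : 0 ≤ y 2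
  · obtain ⟨φ, ⟨hφ0, hφ1⟩, hφ⟩ := exists_angle (y 1) (y 2) h2
    by_cases h0 : 0 ≤ y 0
    · have hm : φ ∈ Icc 0 π := ⟨by linarith, by linarith⟩
      refine ⟨φ, ⟨by linarith, by linarith⟩, ?_⟩
      rw [ball_inner, (ball1 hm).1, (ball1 hm).2]
      have := one_le_add_sqrt h0 (by positivity : 0 ≤ y 1 ^2 + y 2 ^2) (by linarith)
      linarith
    · have hm : 3*π - φ ∈ Icc (2*π) (3*π) := ⟨by linarith, by linarith⟩
      refine ⟨3*π - φ, ⟨by linarith, by linarith⟩, ?_⟩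
      rw [ball_inner, (ball3 hm).1, (ball3 hm).2, show 3*π - φ = π - φ + 2*π by ring,
        cos_add_two_pi, sin_add_two_pi, cos_pi_sub, sin_pi_sub]
      have := one_le_add_sqrt (z := - y 0) (by linarith) (by positivity : 0 ≤ y 1 ^2 + y 2 ^2)
        (by linarith)
      linarith
  · push Not at h2
    obtain ⟨φ, ⟨hφ0, hφ1⟩, hφ⟩ := exists_angle (y 0) (-y 2) (by linarith)
    rw [neg_sq] at hφ
    by_cases h0 : 0 ≤ y 1
    · have hm : 4*π - φ ∈ Icc (3*π) (4*π) := ⟨by linarith, by linarith⟩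
      refine ⟨4*π - φ, ⟨by linarith, by linarith⟩, ?_⟩
      rw [ball_inner, (ball4 hm).1, (ball4 hm).2, show 4*π - φ = 2 * π - φ + 2*π by ring,
        cos_add_two_pi, sin_add_two_pi, cos_two_pi_sub, sin_two_pi_sub]
      have := one_le_add_sqrt h0 (by positivity : 0 ≤ y 0 ^2 + y 2 ^2) (by linarith)
      linarith
    · obtain ⟨φ, ⟨hφ0, hφ1⟩, hφ⟩ := exists_angle (-y 0) (-y 2) (by linarith)
      rw [neg_sq, neg_sq] at hφ
      have hm : 2*π - φ ∈ Icc (π) (2*π) := ⟨by linarith, by linarith⟩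
      refine ⟨2*π - φ, ⟨by linarith, by linarith⟩, ?_⟩
      rw [ball_inner, (ball2 hm).1, (ball2 hm).2, cos_two_pi_sub, sin_two_pi_sub]
      have := one_le_add_sqrt (z := - y 1) (by linarith) (by positivity : 0 ≤ y 0 ^2 + y 2 ^2)
        (by linarith)
      linarith

theorem ball_cont : Continuous ballB := by
  unfold ballB ballX ballY
  refine (PiLp.continuous_toLp 2 _).comp (continuous_pi fun i => ?_)
  fin_cases i <;> simp <;> fun_prop

theorem ball_length : eVariationOn ballB (Icc 0 (4*π)) ≤ ENNReal.ofReal (4*π) := by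
  have hpi := pi_pos
  have add : ∀ a b c : ℝ, a ≤ b → b ≤ c → eVariationOn ballB (Icc a c) =
      eVariationOn ballB (Icc a b) + eVariationOn ballB (Icc b c) := by
    intro a b c h1 h2
    have := eVariationOn.Icc_add_Icc ballB (s := univ) h1 h2 (mem_univ _)
    simpa using this.symm
  rw [add 0 π _ (by linarith) (by linarith), add π (2*π) _ (by linarith) (by linarith),
    add (2*π) (3*π) _ (by linarith) (by linarith)]
  have h1 := ball_piece (s := 0) (u := π) (by linarith) fun x hx y hy => by
    rw [(ball1 hx).1, (ball1 hx).2, (ball1 hy).1, (ball1 hy).2]; linarith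
  have h2 := ball_piece (s := π) (u := 2*π) (by linarith) fun x hx y hy => by
    rw [(ball2 hx).1, (ball2 hx).2, (ball2 hy).1, (ball2 hy).2]; linarith
  have h3 := ball_piece (s := 2*π) (u := 3*π) (by linarith) fun x hx y hy => by
    rw [(ball3 hx).1, (ball3 hx).2, (ball3 hy).1, (ball3 hy).2]; linarith
  have h4 := ball_piece (s := 3*π) (u := 4*π) (by linarith) fun x hx y hy => by
    rw [(ball4 hx).1, (ball4 hx).2, (ball4 hy).1, (ball4 hy).2]; linarith
  refine (add_le_add h1 (add_le_add h2 (add_le_add h3 h4))).trans ?_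
  rw [← ENNReal.ofReal_add (by linarith) (by linarith),
    ← ENNReal.ofReal_add (by linarith) (by linarith),
    ← ENNReal.ofReal_add (by linarith) (by linarith)]
  exact ENNReal.ofReal_le_ofReal (by linarith)

theorem Good.L_le {Γ : ℝ → E3} {L : ℝ} (h : Good Γ L) : L ≤ 4*π := by
  have hpi := pi_pos
  have hI : IsInspection 0 (4*π) ballB := by
    refine ⟨by linarith, ball_cont.continuousOn, ?_,
      ne_top_of_le_ne_top ENNReal.ofReal_ne_top ball_length,
      hull_of_support (isCompact_Icc.image ball_cont) ball_support⟩
    have h0 : (0:ℝ) ∈ Icc 0 π := ⟨le_rfl, hpi.le⟩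
    have h4 : (4*π:ℝ) ∈ Icc (3*π) (4*π) := ⟨by linarith, le_rfl⟩
    have hc : cos (4*π) = 1 := by
      rw [show 4*π = 2*π + 2*π by ring, cos_add_two_pi, cos_two_pi]
    have hs : sin (4*π) = 0 := by
      rw [show 4*π = 2*π + 2*π by ring, sin_add_two_pi, sin_two_pi]
    rw [ballB, ballB, (ball1 h0).1, (ball1 h0).2, (ball4 h4).1, (ball4 h4).2, hc, hs]
    simp
  have := (h.minim _ _ _ hI).trans ball_length
  exact (ENNReal.ofReal_le_ofReal_iff (by linarith)).1 this


theorem norm_sq_smul_sub {E : Type*} [NormedAddCommGroup E] [InnerProductSpace ℝ E]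
    (a b : ℝ) (x y : E) :
    ‖a • x - b • y‖^2 = a * b * ‖x - y‖^2 + (b - a) * (b * ‖y‖^2 - a * ‖x‖^2) := by
  rw [norm_sub_sq_real, norm_sub_sq_real, norm_smul, norm_smul, inner_smul_left, inner_smul_right]
  simp only [conj_trivial, Real.norm_eq_abs, mul_pow, sq_abs]
  ring

theorem affine_piece {Γ : ℝ → E3} (hd : ∀ x y, x ≤ y → dist (Γ x) (Γ y) ≤ y - x)
    {k ε : ℝ} {w : ℝ → ℝ} {x y : ℝ} (hxy : x ≤ y) (hε : 0 ≤ ε)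
    (hw : w y - w x = k * (y - x)) (hx : w x ∈ Icc (0:ℝ) 1) (hy : w y ∈ Icc (0:ℝ) 1) :
    dist ((1 + ε * w x) • Γ x) ((1 + ε * w y) • Γ y) ≤
      ((2 + ε^2) * (y - x) + ε * ((w x + w y) * (y - x)) +
        ε * k * ((1 + ε * w y) * ‖Γ y‖^2 - (1 + ε * w x) * ‖Γ x‖^2)) / 2 := by
  rcases hxy.eq_or_lt with rfl | hlt
  · simp
  rw [dist_eq_norm]
  set D := ‖(1 + ε * w x) • Γ x - (1 + ε * w y) • Γ y‖ with hD
  have hD2 := norm_sq_smul_sub (1 + ε * w x) (1 + ε * w y) (Γ x) (Γ y)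
  rw [← hD] at hD2
  have hl : ‖Γ x - Γ y‖^2 ≤ (y - x)^2 := by
    have := hd x y hxy
    rw [dist_eq_norm] at this
    have h0 := norm_nonneg (Γ x - Γ y)
    nlinarith
  obtain ⟨hx0, hx1⟩ := hx
  obtain ⟨hy0, hy1⟩ := hy
  have hdiff : (1 + ε * w y) - (1 + ε * w x) = ε * k * (y - x) := by
    rw [show (1 + ε * w y) - (1 + ε * w x) = ε * (w y - w x) by ring, hw]; ring
  rw [hdiff] at hD2
  have hΔ : 0 < y - x := by linarith
  have hll : (1 + ε * w x) * (1 + ε * w y) ≤ 1 + ε * (w x + w y) + ε^2 := by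
    have : w x * w y ≤ 1 := by nlinarith
    nlinarith [sq_nonneg ε]
  have hll0 : 0 ≤ (1 + ε * w x) * (1 + ε * w y) := by positivity
  have h1 : (1 + ε * w x) * (1 + ε * w y) * ‖Γ x - Γ y‖^2 ≤
      (1 + ε * (w x + w y) + ε^2) * (y - x)^2 :=
    mul_le_mul hll hl (by positivity) (hll0.trans hll)
  have h2 : 2 * D * (y - x) ≤ D^2 + (y-x)^2 := by nlinarith [sq_nonneg (D - (y - x))]
  have h3 : 2 * D * (y - x) ≤ ((2 + ε^2) * (y - x) + ε * ((w x + w y) * (y - x)) +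
        ε * k * ((1 + ε * w y) * ‖Γ y‖^2 - (1 + ε * w x) * ‖Γ x‖^2)) * (y - x) := by
    rw [hD2] at h2
    nlinarith
  have := le_of_mul_le_mul_right h3 hΔ
  linarith

theorem good_concave {Γ : ℝ → E3} {L : ℝ} (h : Good Γ L) {s t u : ℝ} (hst : s < t) (htu : t < u)
    (hL : u - s ≤ L) :
    0 ≤ (‖Γ t‖^2 - ‖Γ s‖^2) / (t - s) - (‖Γ u‖^2 - ‖Γ t‖^2) / (u - t) + (u - s) := by
  have hA : 0 < t - s := by linarith
  have hB : 0 < u - t := by linarith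
  set w : ℝ → ℝ := fun x => min ((x - s) / (t - s)) ((u - x) / (u - t)) with hw
  have hw1 : ∀ x ∈ Icc s t, w x = (x - s) / (t - s) := by
    intro x hx
    refine min_eq_left ?_
    have h1 : (x - s) / (t - s) ≤ 1 := by rw [div_le_one hA]; linarith [hx.2]
    have h2 : 1 ≤ (u - x) / (u - t) := by rw [one_le_div hB]; linarith [hx.2]
    linarith
  have hw2 : ∀ x ∈ Icc t u, w x = (u - x) / (u - t) := by
    intro x hx
    refine min_eq_right ?_
    have h1 : 1 ≤ (x - s) / (t - s) := by rw [one_le_div hA]; linarith [hx.1]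
    have h2 : (u - x) / (u - t) ≤ 1 := by rw [div_le_one hB]; linarith [hx.1]
    linarith
  have hw1' : ∀ x ∈ Icc s t, w x ∈ Icc (0:ℝ) 1 := by
    intro x hx
    rw [hw1 x hx]
    exact ⟨div_nonneg (by linarith [hx.1]) hA.le, by rw [div_le_one hA]; linarith [hx.2]⟩
  have hw2' : ∀ x ∈ Icc t u, w x ∈ Icc (0:ℝ) 1 := by
    intro x hx
    rw [hw2 x hx]
    exact ⟨div_nonneg (by linarith [hx.2]) hB.le, by rw [div_le_one hB]; linarith [hx.1]⟩
  have hws : w s = 0 := by rw [hw1 s ⟨le_rfl, hst.le⟩]; simp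
  have hwt : w t = 1 := by rw [hw1 t ⟨hst.le, le_rfl⟩]; field_simp
  have hwu : w u = 0 := by rw [hw2 u ⟨htu.le, le_rfl⟩]; simp
  have hwc : Continuous w := by
    rw [hw]; fun_prop
  set X := (‖Γ t‖^2 - ‖Γ s‖^2) / (t - s) - (‖Γ u‖^2 - ‖Γ t‖^2) / (u - t) + (u - s) with hX
  set Y := (u - s) + ‖Γ t‖^2 / (t - s) + ‖Γ t‖^2 / (u - t) with hY
  have key : ∀ ε : ℝ, 0 < ε → 0 ≤ X + ε * Y := by
    intro ε hε
    set β : ℝ → E3 := fun x => (1 + ε * w x) • Γ x with hβ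
    have hβc : Continuous β := by
      have := h.lip.continuous
      rw [hβ]; fun_prop
    have v1 := eVar_le_of_dist (f := β) (s := s) (u := t) (P := fun z => ((2 + ε^2) * z +
        ε * (w z ^2 * (t - s)) + ε * (1/(t-s)) * ((1 + ε * w z) * ‖Γ z‖^2)) / 2) hst.le (by
      intro x y hx hxy hy
      have e1 := hw1 x ⟨hx, hxy.trans hy⟩
      have e2 := hw1 y ⟨hx.trans hxy, hy⟩
      have e3 : w y - w x = (1/(t-s)) * (y - x) := by rw [e1, e2]; field_simp; ring
      have := affine_piece h.dist_le hxy hε.le e3 (hw1' x ⟨hx, hxy.trans hy⟩)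
        (hw1' y ⟨hx.trans hxy, hy⟩)
      refine this.trans (le_of_eq ?_)
      have e4 : (w x + w y) * (y - x) = w y ^ 2 * (t - s) - w x ^2 * (t - s) := by
        have : y - x = (w y - w x) * (t - s) := by rw [e3]; field_simp
        rw [this]; ring
      rw [e4]; ring)
    have v2 := eVar_le_of_dist (f := β) (s := t) (u := u) (P := fun z => ((2 + ε^2) * z -
        ε * (w z ^2 * (u - t)) + ε * (-1/(u-t)) * ((1 + ε * w z) * ‖Γ z‖^2)) / 2) htu.le (by
      intro x y hx hxy hy
      have e1 := hw2 x ⟨hx, hxy.trans hy⟩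
      have e2 := hw2 y ⟨hx.trans hxy, hy⟩
      have e3 : w y - w x = (-1/(u-t)) * (y - x) := by rw [e1, e2]; field_simp; ring
      have := affine_piece h.dist_le hxy hε.le e3 (hw2' x ⟨hx, hxy.trans hy⟩)
        (hw2' y ⟨hx.trans hxy, hy⟩)
      refine this.trans (le_of_eq ?_)
      have e4 : (w x + w y) * (y - x) = -(w y ^ 2 * (u - t)) + w x ^2 * (u - t) := by
        have : y - x = - (w y - w x) * (u - t) := by rw [e3]; field_simp
        rw [this]; ring
      rw [e4]; ring)
    have hadd : eVariationOn β (Icc s u) =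
        eVariationOn β (Icc s t) + eVariationOn β (Icc t u) := by
      have := eVariationOn.Icc_add_Icc β (s := univ) hst.le htu.le (mem_univ _)
      simpa using this.symm
    have hr := h.rival (β := β) (hst.trans htu).le (by linarith) hβc.continuousOn
      (fun x hx => ⟨1 + ε * w x, by
        have : 0 ≤ w x := by
          rcases le_total x t with h1 | h1
          · exact (hw1' x ⟨hx.1, h1⟩).1
          · exact (hw2' x ⟨h1, hx.2⟩).1
        nlinarith, rfl⟩) (by simp [hβ, hws]) (by simp [hβ, hwu])
    rw [hadd] at hr
    have hr2 := hr.trans (add_le_add v1 v2)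
    simp only [hws, hwt, hwu] at hr2
    have hmax : ∀ p q : ℝ, ENNReal.ofReal (u - s) ≤ ENNReal.ofReal p + ENNReal.ofReal q →
        0 ≤ p → 0 ≤ q → u - s ≤ p + q := by
      intro p q h1 hp hq
      rw [← ENNReal.ofReal_add hp hq] at h1
      exact (ENNReal.ofReal_le_ofReal_iff (add_nonneg hp hq)).1 h1
    have p1 : ∀ x y : ℝ, dist (β x) (β y) ≥ 0 := fun x y => dist_nonneg
    have hfin := hmax _ _ hr2 ?_ ?_
    · have e : X * ε + ε^2 * Y = ((2 + ε^2) * t + ε * (1^2 * (t-s)) + ε * (1/(t-s)) * ((1 + ε * 1) * ‖Γ t‖^2))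
          - ((2 + ε^2) * s + ε * (0^2 * (t-s)) + ε * (1/(t-s)) * ((1 + ε * 0) * ‖Γ s‖^2))
          + (((2 + ε^2) * u - ε * (0^2 * (u-t)) + ε * (-1/(u-t)) * ((1 + ε * 0) * ‖Γ u‖^2))
          - ((2 + ε^2) * t - ε * (1^2 * (u-t)) + ε * (-1/(u-t)) * ((1 + ε * 1) * ‖Γ t‖^2)))
          - 2 * (u - s) := by
        rw [hX, hY]; field_simp; ring
      have : 0 ≤ ε * (X + ε * Y) := by nlinarith
      exact nonneg_of_mul_nonneg_right this hε
    · have e1 := affine_piece h.dist_le hst.le hε.le (w := w) (k := 1/(t-s)) (by rw [hws, hwt]; field_simp; ring)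
        (hw1' s ⟨le_rfl, hst.le⟩) (hw1' t ⟨hst.le, le_rfl⟩)
      refine (dist_nonneg.trans e1).trans (le_of_eq ?_)
      rw [hws, hwt]; ring
    · have e1 := affine_piece h.dist_le htu.le hε.le (w := w) (k := -1/(u-t)) (by rw [hwu, hwt]; field_simp; ring)
        (hw2' t ⟨le_rfl, htu.le⟩) (hw2' u ⟨htu.le, le_rfl⟩)
      refine (dist_nonneg.trans e1).trans (le_of_eq ?_)
      rw [hwu, hwt]; ring
  by_contra hneg
  push Not at hneg
  have hYpos : 0 < Y := by
    have : 0 < u - s := by linarith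
    positivity
  have := key (-X / (2 * Y)) (by apply div_pos <;> linarith)
  have e : X + -X / (2*Y) * Y = X / 2 := by field_simp; ring
  rw [e] at this
  linarith

/-- Second difference bound. -/
theorem good_second_diff {Γ : ℝ → E3} {L : ℝ} (h : Good Γ L) (t : ℝ) {e : ℝ} (he : 0 < e)
    (hL : 2 * e ≤ L) :
    ‖Γ (t + 2*e)‖^2 - 2 * ‖Γ (t+e)‖^2 + ‖Γ t‖^2 ≤ 2 * e^2 := by
  have := good_concave h (s := t) (t := t + e) (u := t + 2*e) (by linarith) (by linarith) (by linarith)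
  rw [show t + e - t = e by ring, show t + 2*e - (t+e) = e by ring, show t + 2*e - t = 2*e by ring,
    ← sub_div, div_add' _ _ _ he.ne', le_div_iff₀ he] at this
  linarith


/-- A smooth cutoff: `0` below `0.999`, `1` above `1`. -/
def chi (s : ℝ) : ℝ := Real.smoothTransition (1000 * s - 999)

theorem chi_contDiff : ContDiff ℝ 1 chi := by
  unfold chi
  exact (Real.smoothTransition.contDiff (n := 1)).comp (by fun_prop)

theorem chi_zero {s : ℝ} (h : s ≤ 999/1000) : chi s = 0 :=
  Real.smoothTransition.zero_of_nonpos (by linarith)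

theorem chi_one {s : ℝ} (h : 1 ≤ s) : chi s = 1 :=
  Real.smoothTransition.one_of_one_le (by linarith)

theorem chi_nonneg (s : ℝ) : 0 ≤ chi s := Real.smoothTransition.nonneg _
theorem chi_le_one (s : ℝ) : chi s ≤ 1 := Real.smoothTransition.le_one _

theorem chi_mono : Monotone chi := by
  intro x y hxy
  exact Real.smoothTransition.monotone (by linarith)

theorem chi_cont : Continuous chi := chi_contDiff.continuous

theorem chi_deriv (s : ℝ) : HasDerivAt chi (deriv chi s) s :=
  (chi_contDiff.differentiable (by norm_num) s).hasDerivAt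

theorem chi_deriv_cont : Continuous (deriv chi) := chi_contDiff.continuous_deriv_one

theorem chi_deriv_nonneg (s : ℝ) : 0 ≤ deriv chi s := chi_mono.deriv_nonneg

theorem chi_deriv_zero {s : ℝ} (h : s ∉ Icc (999/1000 : ℝ) 1) : deriv chi s = 0 := by
  rw [mem_Icc, not_and_or, not_le, not_le] at h
  rcases h with h | h
  · have : chi =ᶠ[nhds s] fun _ => 0 := by
      filter_upwards [Iio_mem_nhds h] with x hx using chi_zero (le_of_lt hx)
    rw [this.deriv_eq]; simp
  · have : chi =ᶠ[nhds s] fun _ => 1 := by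
      filter_upwards [Ioi_mem_nhds h] with x hx using chi_one (le_of_lt hx)
    rw [this.deriv_eq]; simp

theorem chi_lipschitz : ∃ K : ℝ≥0, LipschitzWith K chi := by
  obtain ⟨M, hM⟩ := isCompact_Icc.exists_bound_of_continuousOn
    (chi_deriv_cont.continuousOn (s := Icc (999/1000 : ℝ) 1))
  refine ⟨Real.toNNReal (max M 0), lipschitzWith_of_nnnorm_deriv_le
    (chi_contDiff.differentiable (by norm_num)) fun x => ?_⟩
  rw [← NNReal.coe_le_coe]
  rw [coe_nnnorm, Real.coe_toNNReal _ (le_max_right _ _)]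
  by_cases hx : x ∈ Icc (999/1000 : ℝ) 1
  · exact (hM x hx).trans (le_max_left _ _)
  · rw [chi_deriv_zero hx]; simp

/-- FTC for Lipschitz real functions. -/
theorem lip_ftc {f : ℝ → ℝ} {K : ℝ≥0} (hf : LipschitzWith K f) (a b : ℝ) :
    IntervalIntegrable (deriv f) volume a b ∧ ∫ x in a..b, deriv f x = f b - f a := by
  have := (hf.lipschitzOnWith (s := uIcc a b)).absolutelyContinuousOnInterval
  exact ⟨this.intervalIntegrable_deriv, this.integral_deriv_eq_sub⟩

theorem lip_abs_le {f : ℝ → ℝ} {K : ℝ≥0} (hf : LipschitzWith K f) {a b : ℝ} (hab : a ≤ b) :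
    ENNReal.ofReal |f b - f a| ≤ ∫⁻ t in Ioc a b, ENNReal.ofReal |deriv f t| := by
  obtain ⟨h1, h2⟩ := lip_ftc hf a b
  rw [← h2]
  have h3 := intervalIntegral.abs_integral_le_integral_abs (μ := volume) (f := deriv f) hab
  refine (ENNReal.ofReal_le_ofReal h3).trans ?_
  rw [intervalIntegral.integral_of_le hab,
    ofReal_integral_eq_lintegral_ofReal]
  · have := h1.abs
    rw [intervalIntegrable_iff_integrableOn_Ioc_of_le hab] at this
    exact this
  · exact Filter.Eventually.of_forall fun _ => abs_nonneg _

theorem good_ae_diff {Γ : ℝ → E3} {L : ℝ} (h : Good Γ L) : ∀ᵐ t, DifferentiableAt ℝ Γ t :=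
  h.lip.ae_differentiableAt

theorem good_speed_le {Γ : ℝ → E3} {L : ℝ} (h : Good Γ L) (t : ℝ) : ‖deriv Γ t‖ ≤ 1 := by
  simpa using norm_deriv_le_of_lipschitz (x₀ := t) h.lip

theorem good_inner_lip {Γ : ℝ → E3} {L : ℝ} (h : Good Γ L) (n : E3) :
    LipschitzWith ‖n‖₊ (fun t => ⟪Γ t, n⟫) := by
  refine LipschitzWith.of_dist_le_mul fun x y => ?_
  rw [Real.dist_eq, ← inner_sub_left]
  have h1 := abs_real_inner_le_norm (Γ x - Γ y) n
  have h2 := h.lip.dist_le_mul x y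
  rw [dist_eq_norm] at h2
  simp only [NNReal.coe_one, one_mul] at h2
  rw [mul_comm, coe_nnnorm]
  exact h1.trans (mul_le_mul_of_nonneg_right h2 (norm_nonneg _))

theorem speed_meas (Γ : ℝ → E3) : Measurable (fun t => ‖deriv Γ t‖) := (measurable_deriv Γ).norm

theorem good_speed_int {Γ : ℝ → E3} {L : ℝ} (h : Good Γ L) (a b : ℝ) :
    IntervalIntegrable (fun t => ‖deriv Γ t‖) volume a b := by
  refine (intervalIntegrable_const (c := (1:ℝ))).mono_fun
    (speed_meas Γ).aestronglyMeasurable (Filter.Eventually.of_forall fun t => ?_)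
  simpa using good_speed_le h t

theorem good_dist_le_int {Γ : ℝ → E3} {L : ℝ} (h : Good Γ L) {x y : ℝ} (hxy : x ≤ y) :
    dist (Γ x) (Γ y) ≤ ∫ t in x..y, ‖deriv Γ t‖ := by
  set n := Γ y - Γ x with hn
  rw [dist_comm, dist_eq_norm, ← hn]
  rcases eq_or_ne n 0 with h0 | h0
  · rw [h0, norm_zero]
    exact intervalIntegral.integral_nonneg hxy fun _ _ => norm_nonneg _
  have hnp : 0 < ‖n‖ := norm_pos_iff.2 h0
  obtain ⟨h1, h2⟩ := lip_ftc (good_inner_lip h n) x y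
  rw [← inner_sub_left, ← hn, real_inner_self_eq_norm_sq] at h2
  have h3 : ∫ t in x..y, deriv (fun t => ⟪Γ t, n⟫) t ≤ ∫ t in x..y, ‖deriv Γ t‖ * ‖n‖ := by
    refine intervalIntegral.integral_mono_ae hxy h1 ((good_speed_int h x y).mul_const _) ?_
    filter_upwards [good_ae_diff h] with t ht
    have : HasDerivAt (fun t => ⟪Γ t, n⟫) ⟪deriv Γ t, n⟫ t := by
      have := ht.hasDerivAt.inner ℝ (hasDerivAt_const t n)
      simpa using this
    rw [this.deriv]
    exact real_inner_le_norm _ _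
  rw [h2, intervalIntegral.integral_mul_const, sq] at h3
  exact le_of_mul_le_mul_right h3 hnp

theorem good_unit_speed {Γ : ℝ → E3} {L : ℝ} (h : Good Γ L) :
    ∀ᵐ t ∂(volume.restrict (Icc 0 L)), ‖deriv Γ t‖ = 1 := by
  have hL := h.pos.le
  have hr := h.rival_le (s := 0) (u := L) (β := Γ) hL (by simp) h.lip.continuous.continuousOn
    (fun t _ => ⟨1, le_rfl, by simp⟩) rfl rfl
    (V := ∫ t in (0:ℝ)..L, ‖deriv Γ t‖) (intervalIntegral.integral_nonneg hL fun _ _ => norm_nonneg _)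
    (by
      have := eVar_le_of_dist (f := Γ) (P := fun z => ∫ t in (0:ℝ)..z, ‖deriv Γ t‖) hL (by
        intro x y _ hxy _
        refine (good_dist_le_int h hxy).trans (le_of_eq ?_)
        rw [intervalIntegral.integral_interval_sub_left (good_speed_int h _ _)
          (good_speed_int h _ _)])
      simpa using this)
  have hi := good_speed_int h 0 L
  have h2 : ∫ t in (0:ℝ)..L, (1 - ‖deriv Γ t‖) = 0 := by
    apply le_antisymm
    · rw [intervalIntegral.integral_sub intervalIntegrable_const hi]
      simp
      linarith
    · exact intervalIntegral.integral_nonneg hL fun t _ => by linarith [good_speed_le h t]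
  rw [intervalIntegral.integral_of_le hL, ← integral_Icc_eq_integral_Ioc,
    integral_eq_zero_iff_of_nonneg_ae] at h2
  · filter_upwards [h2] with t ht
    simp at ht; linarith
  · exact Filter.Eventually.of_forall fun t => by simp; exact good_speed_le h t
  · have := (intervalIntegrable_const (c := (1:ℝ)) (μ := volume) (a := 0) (b := L)).sub hi
    rw [intervalIntegrable_iff_integrableOn_Icc_of_le hL] at this
    exact this

theorem good_crofton {Γ : ℝ → E3} {L : ℝ} (h : Good Γ L) (h0 : Γ 0 = 0) {z : E3} (hz : ‖z‖ = 1) :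
    2 ≤ ∫⁻ t in Icc 0 L, ENNReal.ofReal (deriv chi ⟪Γ t, z⟫ * |⟪deriv Γ t, z⟫|) := by
  obtain ⟨K, hK⟩ := chi_lipschitz
  have hf : LipschitzWith (K * ‖z‖₊) (fun t => chi ⟪Γ t, z⟫) := hK.comp (good_inner_lip h z)
  obtain ⟨t0, ht0⟩ := h.hull z hz
  obtain ⟨t1, ht1, hte⟩ := h.window 0 t0
  rw [← hte] at ht0
  rw [zero_add] at ht1
  have e0 : chi ⟪Γ 0, z⟫ = 0 := by rw [h0, inner_zero_left]; exact chi_zero (by norm_num)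
  have eL : chi ⟪Γ L, z⟫ = 0 := by
    have := h.per 0
    rw [zero_add] at this
    rw [this]; exact e0
  have e1 : chi ⟪Γ t1, z⟫ = 1 := chi_one ht0
  have a1 := lip_abs_le hf ht1.1
  have a2 := lip_abs_le hf ht1.2.le
  simp only [e0, eL, e1, sub_zero, abs_one, ENNReal.ofReal_one, zero_sub, abs_neg] at a1 a2
  have h2 : (2 : ℝ≥0∞) ≤ ∫⁻ t in Ioc 0 L, ENNReal.ofReal |deriv (fun t => chi ⟪Γ t, z⟫) t| := by
    rw [← Ioc_union_Ioc_eq_Ioc ht1.1 ht1.2.le, lintegral_union measurableSet_Ioc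
      (Ioc_disjoint_Ioc_of_le le_rfl)]
    exact (one_add_one_eq_two (R := ℝ≥0∞)).symm.le.trans (add_le_add a1 a2)
  rw [restrict_Ioc_eq_restrict_Icc] at h2
  refine h2.trans (lintegral_mono_ae ?_)
  filter_upwards [ae_restrict_of_ae (good_ae_diff h)] with t ht
  have d1 : HasDerivAt (fun t => ⟪Γ t, z⟫) ⟪deriv Γ t, z⟫ t := by
    have := ht.hasDerivAt.inner ℝ (hasDerivAt_const t z)
    simpa using this
  have d2 := (chi_deriv ⟪Γ t, z⟫).comp t d1
  have d3 : deriv (fun t => chi ⟪Γ t, z⟫) t = deriv chi ⟪Γ t, z⟫ * ⟪deriv Γ t, z⟫ := d2.deriv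
  rw [d3, abs_mul, abs_of_nonneg (chi_deriv_nonneg _)]


def DD (h τ : ℝ) : ℝ≥0∞ := ∫⁻ y in Metric.ball (0:E3) 1,
  ENNReal.ofReal (deriv chi (‖y‖⁻¹ * (h * y 0 + τ * y 1)) * |‖y‖⁻¹ * y 1|)

theorem exists_frame (x v : E3) (hv : ‖v‖ = 1) :
    ∃ b : OrthonormalBasis (Fin 3) ℝ E3, b 1 = v ∧
      x = √(‖x‖^2 - ⟪x, v⟫^2) • b 0 + ⟪x, v⟫ • v := by
  set τ := ⟪x, v⟫ with hτ
  set p := x - τ • v with hp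
  have hpv : ⟪p, v⟫ = 0 := by
    rw [hp, inner_sub_left, inner_smul_left, real_inner_self_eq_norm_sq, hv]; simp [hτ]
  have hpn : ‖p‖^2 = ‖x‖^2 - τ^2 := by
    rw [hp, norm_sub_sq_real, inner_smul_right, norm_smul, hv, ← hτ]
    simp; ring
  have hh : √(‖x‖^2 - τ^2) = ‖p‖ := by rw [← hpn, Real.sqrt_sq (norm_nonneg _)]
  obtain ⟨b0, hb1, hb2, hb3⟩ : ∃ b0 : E3, ‖b0‖ = 1 ∧ ⟪b0, v⟫ = 0 ∧ p = ‖p‖ • b0 := by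
    rcases eq_or_ne p 0 with h0 | h0
    · have hv0 : v ≠ 0 := by intro h; rw [h] at hv; simp at hv
      have : Fact (Module.finrank ℝ E3 = 2 + 1) := ⟨by simp⟩
      have hfr := Submodule.finrank_orthogonal_span_singleton (𝕜 := ℝ) (n := 2) hv0
      have : Nontrivial (Submodule.span ℝ {v})ᗮ := by
        apply Module.nontrivial_of_finrank_pos (R := ℝ); rw [hfr]; norm_num
      obtain ⟨w, hw⟩ := exists_ne (0 : (Submodule.span ℝ {v})ᗮ)
      have hw0 : (w : E3) ≠ 0 := by simpa using hw
      have hwv : ⟪(w : E3), v⟫ = 0 := by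
        rw [real_inner_comm]
        exact Submodule.mem_orthogonal_singleton_iff_inner_right.1 w.2
      refine ⟨‖(w:E3)‖⁻¹ • (w:E3), ?_, ?_, ?_⟩
      · rw [norm_smul, norm_inv, norm_norm, inv_mul_cancel₀ (norm_ne_zero_iff.2 hw0)]
      · rw [inner_smul_left, hwv]; simp
      · rw [h0]; simp
    · refine ⟨‖p‖⁻¹ • p, ?_, ?_, ?_⟩
      · rw [norm_smul, norm_inv, norm_norm, inv_mul_cancel₀ (norm_ne_zero_iff.2 h0)]
      · rw [inner_smul_left, hpv]; simp
      · rw [smul_inv_smul₀ (norm_ne_zero_iff.2 h0)]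
  have hort : Orthonormal ℝ (({0, 1} : Set (Fin 3)).domRestrict (![b0, v, 0] : Fin 3 → E3)) := by
    constructor
    · rintro ⟨i, hi⟩
      rcases hi with rfl | rfl
      · exact hb1
      · exact hv
    · rintro ⟨i, hi⟩ ⟨j, hj⟩ hij
      rcases hi with rfl | rfl <;> rcases hj with rfl | rfl
      · exact absurd rfl hij
      · exact hb2
      · have := hb2
        rw [real_inner_comm] at this
        exact this
      · exact absurd rfl hij
  obtain ⟨b, hb⟩ := hort.exists_orthonormalBasis_extension_of_card_eq (by simp)
  have e0 := hb 0 (by simp)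
  have e1 := hb 1 (by simp)
  simp at e0 e1
  refine ⟨b, e1, ?_⟩
  rw [hh, e0, ← hb3, hp]; abel

theorem DD_rot (x v : E3) (hv : ‖v‖ = 1) :
    ∫⁻ y in Metric.ball (0:E3) 1,
      ENNReal.ofReal (deriv chi ⟪x, ‖y‖⁻¹ • y⟫ * |⟪v, ‖y‖⁻¹ • y⟫|) =
    DD (√(‖x‖^2 - ⟪x, v⟫^2)) ⟪x, v⟫ := by
  obtain ⟨b, hb1, hx⟩ := exists_frame x v hv
  set h := √(‖x‖^2 - ⟪x, v⟫^2)
  set τ := ⟪x, v⟫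
  have hmp := b.measurePreserving_repr
  have hpre : b.repr ⁻¹' (Metric.ball (0:E3) 1) = Metric.ball (0:E3) 1 := by
    ext y; simp
  unfold DD
  have key := hmp.setLIntegral_comp_preimage_emb
    (b.repr.toHomeomorph.measurableEmbedding) (fun y : E3 => ENNReal.ofReal
      (deriv chi (‖y‖⁻¹ * (h * y 0 + τ * y 1)) * |‖y‖⁻¹ * y 1|)) (Metric.ball (0:E3) 1)
  rw [← key, hpre]
  refine lintegral_congr fun y => ?_
  have r0 : (b.repr y) 0 = ⟪b 0, y⟫ := b.repr_apply_apply y 0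
  have r1 : (b.repr y) 1 = ⟪v, y⟫ := by rw [← hb1]; exact b.repr_apply_apply y 1
  rw [LinearIsometryEquiv.norm_map, r0, r1, inner_smul_right, inner_smul_right]
  congr 4
  conv_lhs => rw [hx]
  rw [inner_add_left, inner_smul_left, inner_smul_left]
  simp

theorem good_avg {Γ : ℝ → E3} {L : ℝ} (h : Good Γ L) (h0 : Γ 0 = 0) :
    2 * volume (Metric.ball (0:E3) 1) ≤
      ∫⁻ t in Icc 0 L, DD (√(‖Γ t‖^2 - ⟪Γ t, deriv Γ t⟫^2)) ⟪Γ t, deriv Γ t⟫ := by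
  have h1 : ∫⁻ t in Icc 0 L, DD (√(‖Γ t‖^2 - ⟪Γ t, deriv Γ t⟫^2)) ⟪Γ t, deriv Γ t⟫ =
      ∫⁻ t in Icc 0 L, ∫⁻ y in Metric.ball (0:E3) 1,
      ENNReal.ofReal (deriv chi ⟪Γ t, ‖y‖⁻¹ • y⟫ * |⟪deriv Γ t, ‖y‖⁻¹ • y⟫|) := by
    refine lintegral_congr_ae ?_
    filter_upwards [good_unit_speed h] with t ht
    rw [DD_rot _ _ ht]
  rw [h1, lintegral_lintegral_swap]
  · have h2 : 2 * volume (Metric.ball (0:E3) 1) = ∫⁻ y in Metric.ball (0:E3) 1, 2 := by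
      rw [setLIntegral_const]
    rw [h2]
    refine lintegral_mono_ae ?_
    have hne : ∀ᵐ y ∂(volume.restrict (Metric.ball (0:E3) 1)), y ≠ 0 :=
      ae_restrict_of_ae (Measure.ae_ne volume 0)
    filter_upwards [hne] with y hy
    exact good_crofton h h0 (by
      rw [norm_smul, norm_inv, norm_norm, inv_mul_cancel₀ (norm_ne_zero_iff.2 hy)])
  · have m1 : Measurable Γ := h.lip.continuous.measurable
    have m2 : Measurable (deriv Γ) := measurable_deriv Γ
    have m3 : Measurable (deriv chi) := chi_deriv_cont.measurable
    apply Measurable.aemeasurable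
    apply Measurable.ennreal_ofReal
    have m4 : Measurable (fun p : ℝ × E3 => ‖p.2‖⁻¹ • p.2) := by fun_prop
    have m5 : Measurable (fun p : ℝ × E3 => ⟪Γ p.1, ‖p.2‖⁻¹ • p.2⟫) :=
      (m1.comp measurable_fst).inner m4
    have m6 : Measurable (fun p : ℝ × E3 => ⟪deriv Γ p.1, ‖p.2‖⁻¹ • p.2⟫) :=
      (m2.comp measurable_fst).inner m4
    exact (m3.comp m5).mul (measurable_norm.comp m6)


theorem lintegral_E3 (F : ℝ → ℝ → ℝ → ℝ≥0∞)
    (hF : Measurable (fun p : ℝ × ℝ × ℝ => F p.2.1 p.2.2 p.1)) :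
    ∫⁻ y : E3, F (y 0) (y 1) (y 2) = ∫⁻ ζ : ℝ, ∫⁻ ρ in Ioi (0:ℝ), ENNReal.ofReal ρ *
      ∫⁻ α in Ioo (-π) π, F (ρ * cos α) (ρ * sin α) ζ := by
  have e1 : ∫⁻ y : E3, F (y 0) (y 1) (y 2) = ∫⁻ x : Fin 3 → ℝ, F (x 0) (x 1) (x 2) := by
    exact (PiLp.volume_preserving_ofLp (Fin 3)).lintegral_comp_emb
      (MeasurableEquiv.toLp 2 (Fin 3 → ℝ)).symm.measurableEmbedding
      (fun x : Fin 3 → ℝ => F (x 0) (x 1) (x 2))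
  have e2 : ∫⁻ x : Fin 3 → ℝ, F (x 0) (x 1) (x 2) =
      ∫⁻ p : ℝ × (Fin 2 → ℝ), F (p.2 0) (p.2 1) p.1 := by
    have := (volume_preserving_piFinSuccAbove (fun _ : Fin 3 => ℝ) 2).lintegral_comp_emb
      (MeasurableEquiv.measurableEmbedding _) (fun p : ℝ × (Fin 2 → ℝ) => F (p.2 0) (p.2 1) p.1)
    rw [← this]
    rfl
  have m1 : Measurable (fun p : ℝ × (Fin 2 → ℝ) => F (p.2 0) (p.2 1) p.1) := by
    have : Measurable (fun p : ℝ × (Fin 2 → ℝ) => (p.1, p.2 0, p.2 1)) := by fun_prop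
    exact hF.comp this
  rw [e1, e2, Measure.volume_eq_prod, lintegral_prod _ m1.aemeasurable]
  refine lintegral_congr fun ζ => ?_
  have e3 : ∫⁻ y : Fin 2 → ℝ, F (y 0) (y 1) ζ = ∫⁻ p : ℝ × ℝ, F p.1 p.2 ζ := by
    exact (volume_preserving_finTwoArrow ℝ).lintegral_comp_emb
      (MeasurableEquiv.measurableEmbedding _) (fun p : ℝ × ℝ => F p.1 p.2 ζ)
  simp only
  rw [e3, ← lintegral_comp_polarCoord_symm, polarCoord_target, Measure.volume_eq_prod,
    setLIntegral_prod]
  · refine setLIntegral_congr_fun measurableSet_Ioi fun ρ hρ => ?_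
    simp only [polarCoord_symm_apply, smul_eq_mul]
    rw [lintegral_const_mul']
    exact ENNReal.ofReal_ne_top
  · apply Measurable.aemeasurable
    simp only [polarCoord_symm_apply, smul_eq_mul]
    have : Measurable (fun p : ℝ × ℝ => (ζ, p.1 * cos p.2, p.1 * sin p.2)) := by fun_prop
    exact (by fun_prop : Measurable (fun p : ℝ × ℝ => ENNReal.ofReal p.1)).mul (hF.comp this)

def WW : Set (ℝ × ℝ) := {w | 0 < w.2 ∧ w.1^2 + w.2^2 < 1}

theorem WW_meas : MeasurableSet WW := by
  have h1 : MeasurableSet {w : ℝ × ℝ | 0 < w.2} := measurableSet_lt (by fun_prop) (by fun_prop)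
  have h2 : MeasurableSet {w : ℝ × ℝ | w.1^2 + w.2^2 < 1} :=
    measurableSet_lt (by fun_prop) (by fun_prop)
  exact h1.inter h2

def nuW : Measure (ℝ × ℝ) := (volume.restrict WW).withDensity (fun w => ENNReal.ofReal w.2)

instance : SFinite nuW := by unfold nuW; infer_instance

def ccW (w : ℝ × ℝ) : ℝ := (√(w.1^2+w.2^2))⁻¹ * w.2

def AA (c h τ : ℝ) : ℝ≥0∞ := ∫⁻ α in Ioo (-π) π,
  ENNReal.ofReal (deriv chi (c * (h * cos α + τ * sin α)) * |c * sin α|)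

theorem AA_meas : Measurable (fun p : ℝ × ℝ × ℝ => AA p.1 p.2.1 p.2.2) := by
  unfold AA
  refine Measurable.lintegral_prod_right'
    (f := fun (q : (ℝ × ℝ × ℝ) × ℝ) => ENNReal.ofReal (deriv chi (q.1.1 * (q.1.2.1 * cos q.2 +
      q.1.2.2 * sin q.2)) * |q.1.1 * sin q.2|)) ?_
  apply Measurable.ennreal_ofReal
  apply Continuous.measurable
  exact (chi_deriv_cont.comp (by fun_prop)).mul (by fun_prop)

theorem ccW_meas : Measurable ccW := by unfold ccW; fun_prop

theorem DD_eq (h τ : ℝ) : DD h τ = ∫⁻ w, AA (ccW w) h τ ∂nuW := by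
  have m3 : Measurable (deriv chi) := chi_deriv_cont.measurable
  set F : ℝ → ℝ → ℝ → ℝ≥0∞ := fun x y z => if x^2+y^2+z^2 < 1 then
    ENNReal.ofReal (deriv chi ((√(x^2+y^2+z^2))⁻¹ * (h * x + τ * y)) *
      |(√(x^2+y^2+z^2))⁻¹ * y|) else 0 with hFdef
  have hF : Measurable (fun p : ℝ × ℝ × ℝ => F p.2.1 p.2.2 p.1) := by
    simp only [hFdef]
    refine Measurable.ite (measurableSet_lt (by fun_prop) (by fun_prop)) ?_ measurable_const
    apply Measurable.ennreal_ofReal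
    exact (m3.comp (by fun_prop)).mul (by fun_prop)
  have e1 : DD h τ = ∫⁻ y : E3, F (y 0) (y 1) (y 2) := by
    unfold DD
    rw [← lintegral_indicator measurableSet_ball]
    refine lintegral_congr fun y => ?_
    have hn : ‖y‖ = √(y 0^2+y 1^2+y 2^2) := by
      rw [EuclideanSpace.norm_eq]; simp [Fin.sum_univ_three]
    have hb : y ∈ Metric.ball (0:E3) 1 ↔ y 0^2+y 1^2+y 2^2 < 1 := by
      rw [mem_ball_zero_iff, hn, Real.sqrt_lt' one_pos]; simp
    by_cases hy : y 0^2+y 1^2+y 2^2 < 1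
    · rw [indicator_of_mem (hb.2 hy), hn]
      simp only [hFdef, if_pos hy]
    · rw [indicator_of_notMem (fun h => hy (hb.1 h))]
      simp only [hFdef, if_neg hy]
  have hW : WW ⊆ univ ×ˢ Ioi 0 := fun w hw => ⟨trivial, hw.1⟩
  rw [e1, lintegral_E3 F hF]
  have mA : Measurable (fun w => AA (ccW w) h τ) :=
    AA_meas.comp (ccW_meas.prodMk (measurable_const (a := (h, τ))))
  unfold nuW
  rw [lintegral_withDensity_eq_lintegral_mul _ (by fun_prop) mA, ← lintegral_indicator WW_meas]
  have hm : Measurable (WW.indicator ((fun w : ℝ × ℝ => ENNReal.ofReal w.2) *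
      fun w => AA (ccW w) h τ)) :=
    Measurable.indicator ((by fun_prop : Measurable (fun w : ℝ × ℝ => ENNReal.ofReal w.2)).mul mA)
      WW_meas
  rw [Measure.volume_eq_prod, lintegral_prod _ hm.aemeasurable]
  refine lintegral_congr fun ζ => ?_
  rw [← lintegral_indicator measurableSet_Ioi]
  refine lintegral_congr fun ρ => ?_
  by_cases hρ : 0 < ρ
  · rw [indicator_of_mem (show ρ ∈ Ioi 0 from hρ)]
    have hs : ∀ α, (ρ * cos α)^2 + (ρ * sin α)^2 + ζ^2 = ζ^2 + ρ^2 := fun α => by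
      have := sin_sq_add_cos_sq α
      linear_combination ρ^2 * this
    by_cases hw : ζ^2 + ρ^2 < 1
    · rw [indicator_of_mem (show (ζ,ρ) ∈ WW from ⟨hρ, hw⟩)]
      simp only [Pi.mul_apply, AA, hFdef, hs, if_pos hw, ccW]
      congr 1
      refine lintegral_congr fun α => ?_
      congr 3 <;> ring_nf
    · rw [indicator_of_notMem (show (ζ,ρ) ∉ WW from fun h => hw h.2)]
      simp [hFdef, hs, if_neg hw]
  · rw [indicator_of_notMem (show ρ ∉ Ioi 0 from hρ), indicator_of_notMem (fun h => hρ h.1)]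


theorem fiber_half {h T κ : ℝ → ℝ} {L c σ : ℝ} (hc : 0 ≤ c) (hc1 : c ≤ 1)
    (hσ : σ^2 = 1)
    (hh : ∀ t, HasDerivAt h (κ t * T t) t) (hT : ∀ t, HasDerivAt T (1 - κ t * h t) t)
    (hκ : Continuous κ) (hpos : ∀ t, 0 ≤ h t)
    (h0 : h 0^2 + T 0^2 < (999/1000)^2) (hL : h L^2 + T L^2 < (999/1000)^2) :
    ∫ t in (0:ℝ)..L, ∫ α in (0:ℝ)..π, deriv chi (c * (h t * cos α + σ * T t * sin α)) * (c * sin α)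
      = ∫ t in (0:ℝ)..L, κ t * chi (c * h t) := by
  have ch : Continuous h := continuous_iff_continuousAt.2 fun t => (hh t).continuousAt
  have cT : Continuous T := continuous_iff_continuousAt.2 fun t => (hT t).continuousAt
  set u : ℝ → ℝ → ℝ := fun t α => c * (h t * cos α + σ * T t * sin α) with hu
  set G1 : ℝ → ℝ → ℝ := fun t α => σ * (deriv chi (u t α) *
    (c * (κ t * T t * cos α + σ * (1 - κ t * h t) * sin α))) with hG1
  set G2 : ℝ → ℝ → ℝ := fun t α => κ t * (deriv chi (u t α) *
    (c * (- h t * sin α + σ * T t * cos α))) with hG2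
  have cd := chi_deriv_cont
  have cu : Continuous (fun p : ℝ × ℝ => u p.1 p.2) := by simp only [hu]; fun_prop
  have cdu : Continuous (fun p : ℝ × ℝ => deriv chi (u p.1 p.2)) := cd.comp cu
  have cG1 : Continuous (fun p : ℝ × ℝ => G1 p.1 p.2) := by simp only [hG1]; fun_prop
  have cG2 : Continuous (fun p : ℝ × ℝ => G2 p.1 p.2) := by simp only [hG2]; fun_prop
  have bd : ∀ t, h t^2 + T t^2 < (999/1000)^2 → ∀ α, chi (u t α) = 0 := by
    intro t ht α
    apply chi_zero
    have e1 : (h t * cos α + σ * T t * sin α)^2 ≤ h t^2 + T t^2 := by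
      have := sin_sq_add_cos_sq α
      have e : h t^2 + T t^2 - (h t * cos α + σ * T t * sin α)^2
        = (h t * sin α - σ * T t * cos α)^2 := by
        linear_combination (-(h t^2 + σ^2 * T t^2)) * this + (-T t^2) * hσ
      nlinarith [sq_nonneg (h t * sin α - σ * T t * cos α)]
    have e2 : h t * cos α + σ * T t * sin α ≤ 999/1000 := by
      apply le_of_sq_le_sq _ (by norm_num)
      linarith
    simp only [hu]
    nlinarith
  have key : ∀ t α, deriv chi (u t α) * (c * sin α) = G1 t α - G2 t α := by
    intro t α
    simp only [hG1, hG2]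
    linear_combination (-(deriv chi (u t α) * c * (1 - κ t * h t) * sin α)) * hσ
  have i2 : ∀ t, ∫ α in (0:ℝ)..π, G2 t α = - (κ t * chi (c * h t)) := by
    intro t
    have d : ∀ α ∈ uIcc 0 π, HasDerivAt (fun α => κ t * chi (u t α)) (G2 t α) α := by
      intro α _
      refine HasDerivAt.const_mul _ ?_
      refine HasDerivAt.comp (h₂ := chi) (h := fun α => u t α) α (chi_deriv _) ?_
      refine HasDerivAt.const_mul _ ?_
      have := ((hasDerivAt_cos α).const_mul (h t)).add ((hasDerivAt_sin α).const_mul (σ * T t))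
      refine this.congr_deriv ?_
      ring
    rw [intervalIntegral.integral_eq_sub_of_hasDerivAt d
      ((cG2.comp (Continuous.prodMk_right t)).intervalIntegrable _ _)]
    have z : chi (u t π) = 0 := by
      apply chi_zero; simp only [hu, cos_pi, sin_pi]
      nlinarith [mul_nonneg hc (hpos t)]
    rw [z]; simp [hu]
  have i1 : ∀ α, ∫ t in (0:ℝ)..L, G1 t α = 0 := by
    intro α
    have d : ∀ t ∈ uIcc 0 L, HasDerivAt (fun t => σ * chi (u t α)) (G1 t α) t := by
      intro t _
      refine HasDerivAt.const_mul _ ?_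
      refine HasDerivAt.comp (h₂ := chi) (h := fun t => u t α) t (chi_deriv _) ?_
      refine HasDerivAt.const_mul _ ?_
      have := ((hh t).mul_const (cos α)).add (((hT t).const_mul σ).mul_const (sin α))
      exact this
    rw [intervalIntegral.integral_eq_sub_of_hasDerivAt d
      ((cG1.comp (Continuous.prodMk_left α)).intervalIntegrable _ _)]
    rw [bd 0 h0, bd L hL]; ring
  have s1 : ∫ t in (0:ℝ)..L, ∫ α in (0:ℝ)..π, G1 t α = 0 := by
    rw [intervalIntegral_intervalIntegral_swap]
    · simp [i1]
    · refine ((show Continuous (Function.uncurry G1) from cG1).continuousOn.integrableOn_compact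
        ((isCompact_uIcc (a := 0) (b := L)).prod (isCompact_uIcc (a := 0) (b := π)))).mono_set ?_
      exact prod_mono uIoc_subset_uIcc uIoc_subset_uIcc
  have cI : ∀ G : ℝ → ℝ → ℝ, Continuous (fun p : ℝ × ℝ => G p.1 p.2) →
      Continuous fun t => ∫ α in (0:ℝ)..π, G t α := fun G hG =>
    intervalIntegral.continuous_parametric_intervalIntegral_of_continuous' hG 0 π
  calc _ = ∫ t in (0:ℝ)..L, ((∫ α in (0:ℝ)..π, G1 t α) - ∫ α in (0:ℝ)..π, G2 t α) := by
        congr 1; ext t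
        refine Eq.trans ?_ (intervalIntegral.integral_sub
          ((cG1.comp (Continuous.prodMk_right t)).intervalIntegrable _ _)
          ((cG2.comp (Continuous.prodMk_right t)).intervalIntegrable _ _))
        congr 1; ext α
        exact key t α
    _ = _ := by
        rw [intervalIntegral.integral_sub ((cI _ cG1).intervalIntegrable _ _)
          ((cI _ cG2).intervalIntegrable _ _), s1]
        simp only [i2]
        simp

theorem lint_Ioo {f : ℝ → ℝ} (hf : Continuous f) {a b : ℝ} (hab : a ≤ b) (h0 : ∀ t, 0 ≤ f t) :
    ∫⁻ t in Ioo a b, ENNReal.ofReal (f t) = ENNReal.ofReal (∫ t in a..b, f t) := by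
  rw [intervalIntegral.integral_of_le hab, ofReal_integral_eq_lintegral_ofReal
    (hf.integrableOn_Icc.mono_set Ioc_subset_Icc_self) (Filter.Eventually.of_forall h0),
    restrict_Ioo_eq_restrict_Ioc]

theorem fiber {h T κ : ℝ → ℝ} {L c : ℝ} (hLp : 0 ≤ L) (hc : 0 ≤ c) (hc1 : c ≤ 1)
    (hh : ∀ t, HasDerivAt h (κ t * T t) t) (hT : ∀ t, HasDerivAt T (1 - κ t * h t) t)
    (hκ : Continuous κ) (hκ0 : ∀ t, 0 ≤ κ t) (hpos : ∀ t, 0 ≤ h t)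
    (h0 : h 0^2 + T 0^2 < (999/1000)^2) (hL : h L^2 + T L^2 < (999/1000)^2) :
    ∫⁻ t in Icc 0 L, AA c (h t) (T t) = ∫⁻ t in Icc 0 L, ENNReal.ofReal (2 * κ t * chi (c * h t)) := by
  have ch : Continuous h := continuous_iff_continuousAt.2 fun t => (hh t).continuousAt
  have cT : Continuous T := continuous_iff_continuousAt.2 fun t => (hT t).continuousAt
  have cd := chi_deriv_cont
  set g : ℝ → ℝ → ℝ → ℝ := fun σ t α =>
    deriv chi (c * (h t * cos α + σ * T t * sin α)) * (c * sin α) with hg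
  have cg : ∀ σ, Continuous (fun p : ℝ × ℝ => g σ p.1 p.2) := by
    intro σ; simp only [hg]
    exact (cd.comp (by fun_prop)).mul (by fun_prop)
  have hAA : ∀ t, AA c (h t) (T t) = ENNReal.ofReal
      ((∫ α in (0:ℝ)..π, g 1 t α) + ∫ α in (0:ℝ)..π, g (-1) t α) := by
    intro t
    unfold AA
    have cf : Continuous (fun α => deriv chi (c * (h t * cos α + T t * sin α)) * |c * sin α|) :=
      (cd.comp (by fun_prop)).mul (by fun_prop)
    rw [lint_Ioo cf (by linarith [pi_pos]) (fun α => mul_nonneg (chi_deriv_nonneg _) (abs_nonneg _))]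
    congr 1
    rw [← intervalIntegral.integral_add_adjacent_intervals (cf.intervalIntegrable _ 0)
      (cf.intervalIntegrable 0 _), add_comm]
    congr 1
    · refine intervalIntegral.integral_congr fun α hα => ?_
      rw [uIcc_of_le pi_pos.le] at hα
      simp only [hg]
      rw [abs_of_nonneg (mul_nonneg hc (sin_nonneg_of_mem_Icc hα)), one_mul]
    · have := intervalIntegral.integral_comp_neg (a := 0) (b := π)
        (fun α => deriv chi (c * (h t * cos α + T t * sin α)) * |c * sin α|)
      rw [neg_zero] at this
      rw [← this]
      refine intervalIntegral.integral_congr fun α hα => ?_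
      rw [uIcc_of_le pi_pos.le] at hα
      simp only [hg]
      rw [sin_neg, cos_neg, mul_neg c, abs_neg,
        abs_of_nonneg (mul_nonneg hc (sin_nonneg_of_mem_Icc hα))]
      ring_nf
  have gn : ∀ t, 0 ≤ (∫ α in (0:ℝ)..π, g 1 t α) + ∫ α in (0:ℝ)..π, g (-1) t α := by
    intro t
    have : ∀ σ, 0 ≤ ∫ α in (0:ℝ)..π, g σ t α := fun σ =>
      intervalIntegral.integral_nonneg pi_pos.le fun α hα =>
        mul_nonneg (chi_deriv_nonneg _) (mul_nonneg hc (sin_nonneg_of_mem_Icc hα))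
    linarith [this 1, this (-1)]
  have cI : ∀ σ, Continuous fun t => ∫ α in (0:ℝ)..π, g σ t α := fun σ =>
    intervalIntegral.continuous_parametric_intervalIntegral_of_continuous' (cg σ) 0 π
  have cc := chi_cont
  simp only [hAA]
  rw [← restrict_Ioo_eq_restrict_Icc, lint_Ioo (f := fun t => (∫ α in (0:ℝ)..π, g 1 t α) + ∫ α in (0:ℝ)..π, g (-1) t α) ((cI 1).add (cI (-1))) hLp gn,
    lint_Ioo (by fun_prop) hLp (fun t => mul_nonneg (mul_nonneg zero_le_two (hκ0 t)) (chi_nonneg _)),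
    intervalIntegral.integral_add ((cI 1).intervalIntegrable _ _) ((cI (-1)).intervalIntegrable _ _),
    fiber_half hc hc1 (by norm_num) hh hT hκ hpos h0 hL,
    fiber_half hc hc1 (by norm_num) hh hT hκ hpos h0 hL]
  congr 1
  rw [← two_mul, ← intervalIntegral.integral_const_mul]
  simp only [mul_assoc]

theorem ccW_nonneg {w : ℝ × ℝ} (hw : w ∈ WW) : 0 ≤ ccW w :=
  mul_nonneg (by positivity) hw.1.le

theorem ccW_le {w : ℝ × ℝ} (hw : w ∈ WW) : ccW w ≤ 1 := by
  have h1 : 0 < √(w.1^2+w.2^2) := Real.sqrt_pos.2 (by have := hw.1; positivity)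
  unfold ccW
  rw [inv_mul_le_one₀ h1]
  apply Real.le_sqrt_of_sq_le
  nlinarith

theorem nuW_ae {P : ℝ × ℝ → Prop} (h : ∀ w ∈ WW, P w) : ∀ᵐ w ∂nuW, P w := by
  refine (withDensity_absolutelyContinuous _ _).ae_le ?_
  exact (ae_restrict_mem WW_meas).mono h

def JJ (h : ℝ) : ℝ≥0∞ := ∫⁻ w, ENNReal.ofReal (chi (ccW w * h)) ∂nuW

theorem DD_int {h T κ : ℝ → ℝ} {L : ℝ} (hLp : 0 ≤ L)
    (hh : ∀ t, HasDerivAt h (κ t * T t) t) (hT : ∀ t, HasDerivAt T (1 - κ t * h t) t)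
    (hκ : Continuous κ) (hκ0 : ∀ t, 0 ≤ κ t) (hpos : ∀ t, 0 ≤ h t)
    (h0 : h 0^2 + T 0^2 < (999/1000)^2) (hL : h L^2 + T L^2 < (999/1000)^2) :
    ∫⁻ t in Icc 0 L, DD (h t) (T t) = ∫⁻ t in Icc 0 L, ENNReal.ofReal (2 * κ t) * JJ (h t) := by
  have ch : Continuous h := continuous_iff_continuousAt.2 fun t => (hh t).continuousAt
  have cT : Continuous T := continuous_iff_continuousAt.2 fun t => (hT t).continuousAt
  have cc := chi_cont
  have mc := ccW_meas
  simp only [DD_eq]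
  rw [lintegral_lintegral_swap]
  · have : ∫⁻ w, (∫⁻ t in Icc 0 L, AA (ccW w) (h t) (T t)) ∂nuW =
        ∫⁻ w, (∫⁻ t in Icc 0 L, ENNReal.ofReal (2 * κ t * chi (ccW w * h t))) ∂nuW := by
      refine lintegral_congr_ae (nuW_ae fun w hw => ?_)
      exact fiber hLp (ccW_nonneg hw) (ccW_le hw) hh hT hκ hκ0 hpos h0 hL
    rw [this, lintegral_lintegral_swap]
    · refine lintegral_congr fun t => ?_
      unfold JJ
      rw [← lintegral_const_mul' _ _ ENNReal.ofReal_ne_top]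
      refine lintegral_congr fun w => ?_
      rw [ENNReal.ofReal_mul (mul_nonneg zero_le_two (hκ0 t))]
    · apply Measurable.aemeasurable
      apply Measurable.ennreal_ofReal
      have m1 : Measurable (fun p : (ℝ × ℝ) × ℝ => ccW p.1 * h p.2) := by
        have := ch.measurable; fun_prop
      have m2 : Measurable (fun p : (ℝ × ℝ) × ℝ => 2 * κ p.2) := by
        have := hκ.measurable; fun_prop
      exact m2.mul (cc.measurable.comp m1)
  · apply Measurable.aemeasurable
    have m : Measurable (fun p : ℝ × (ℝ × ℝ) => (ccW p.2, h p.1, T p.1)) := by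
      have := ch.measurable; have := cT.measurable; fun_prop
    exact AA_meas.comp m


theorem lint_Icc {f : ℝ → ℝ} (hf : Continuous f) {a b : ℝ} (hab : a ≤ b)
    (h0 : ∀ t ∈ Icc a b, 0 ≤ f t) :
    ∫⁻ t in Icc a b, ENNReal.ofReal (f t) = ENNReal.ofReal (∫ t in a..b, f t) := by
  rw [intervalIntegral.integral_of_le hab, ofReal_integral_eq_lintegral_ofReal
    (hf.integrableOn_Icc.mono_set Ioc_subset_Icc_self) ?_,
    restrict_Ioc_eq_restrict_Icc]
  filter_upwards [ae_restrict_mem measurableSet_Ioc] with t ht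
  exact h0 t (Ioc_subset_Icc_self ht)

theorem JJ_zero {h : ℝ} (h0 : 0 ≤ h) (h1 : h ≤ 999/1000) : JJ h = 0 := by
  unfold JJ
  rw [show (0:ℝ≥0∞) = ∫⁻ _ : ℝ × ℝ, 0 ∂nuW by simp]
  refine lintegral_congr_ae (nuW_ae fun w hw => ?_)
  simp only
  rw [chi_zero, ENNReal.ofReal_zero]
  have := ccW_le hw
  have := ccW_nonneg hw
  nlinarith

theorem JJ_le {h : ℝ} (h1 : 999/1000 < h) : JJ h ≤ ENNReal.ofReal (h / (3 * (999/1000))) := by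
  set s : ℝ := 999/1000/h with hs
  have hp : 0 < h := by linarith
  have s0 : 0 < s := by positivity
  have s1 : s < 1 := by rw [hs, div_lt_one hp]; exact h1
  set k : ℝ := √(1 - s^2) with hk
  have k0 : 0 < k := Real.sqrt_pos.2 (by nlinarith)
  have k2 : k^2 = 1 - s^2 := Real.sq_sqrt (by nlinarith)
  set S : Set (ℝ × ℝ) := {w | s ≤ ccW w} with hS
  have mS : MeasurableSet S := measurableSet_le measurable_const ccW_meas
  have a1 : JJ h ≤ ∫⁻ w, S.indicator (fun _ => 1) w ∂nuW := by
    unfold JJ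
    refine lintegral_mono_ae (nuW_ae fun w hw => ?_)
    by_cases hw' : w ∈ S
    · rw [indicator_of_mem hw', ENNReal.ofReal_le_one]; exact chi_le_one _
    · rw [indicator_of_notMem hw', chi_zero]; · simp
      have : ccW w < s := not_le.1 hw'
      have e : s * h = 999/1000 := by rw [hs]; field_simp
      nlinarith
  have a2 : ∫⁻ w, S.indicator (fun _ => 1) w ∂nuW =
      ∫⁻ w : ℝ × ℝ, (WW ∩ S).indicator (fun w => ENNReal.ofReal w.2) w := by
    unfold nuW
    rw [lintegral_indicator mS, setLIntegral_one, withDensity_apply _ mS,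
      Measure.restrict_restrict mS, inter_comm, lintegral_indicator (WW_meas.inter mS)]
  have a3 : ∀ ζ : ℝ, ∫⁻ ρ, (WW ∩ S).indicator (fun w => ENNReal.ofReal w.2) (ζ, ρ) ≤
      (Icc (-k) k).indicator (fun ζ => ENNReal.ofReal ((1 - ζ^2/k^2)/2)) ζ := by
    intro ζ
    set lo := s * |ζ| / k with hlo
    set hi := √(1 - ζ^2) with hhi
    have lo0 : 0 ≤ lo := by positivity
    have sub : ∀ ρ, (ζ, ρ) ∈ WW ∩ S → lo ≤ ρ ∧ ρ ≤ hi := by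
      rintro ρ ⟨⟨hρ, hw⟩, hc⟩
      simp only at hρ hw
      constructor
      · rw [hlo, div_le_iff₀ k0]
        have hc' : s ≤ (√(ζ^2+ρ^2))⁻¹ * ρ := hc
        have hq : 0 < √(ζ^2+ρ^2) := Real.sqrt_pos.2 (by positivity)
        rw [inv_mul_eq_div, le_div_iff₀ hq] at hc'
        have hq2 : √(ζ^2+ρ^2)^2 = ζ^2+ρ^2 := Real.sq_sqrt (by positivity)
        apply le_of_sq_le_sq _ (by positivity)
        rw [mul_pow, sq_abs, mul_pow, k2]
        have : (s * √(ζ^2+ρ^2))^2 ≤ ρ^2 := by gcongr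
        rw [mul_pow, hq2] at this
        nlinarith
      · exact Real.le_sqrt_of_sq_le (by linarith)
    by_cases hz : ζ ∈ Icc (-k) k
    · rw [indicator_of_mem hz]
      have hzk : |ζ| ≤ k := abs_le.2 hz
      have hz2 : ζ^2 ≤ k^2 := by rw [← sq_abs ζ]; gcongr
      have hi2 : hi^2 = 1 - ζ^2 := Real.sq_sqrt (by nlinarith)
      have lo2 : lo^2 = s^2*ζ^2/k^2 := by rw [hlo, div_pow, mul_pow, sq_abs]
      have e : hi^2 - lo^2 = 1 - ζ^2/k^2 := by
        rw [hi2, lo2]; field_simp; rw [k2]; ring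
      have lohi : lo ≤ hi := by
        apply le_of_sq_le_sq _ (Real.sqrt_nonneg _)
        have : ζ^2/k^2 ≤ 1 := by rw [div_le_one (by positivity)]; exact hz2
        linarith
      calc _ ≤ ∫⁻ ρ, (Icc lo hi).indicator (fun ρ => ENNReal.ofReal ρ) ρ := by
            refine lintegral_mono fun ρ => ?_
            by_cases hw : (ζ, ρ) ∈ WW ∩ S
            · rw [indicator_of_mem hw, indicator_of_mem (show ρ ∈ Icc lo hi from sub ρ hw)]
            · rw [indicator_of_notMem hw]; exact zero_le
        _ = ENNReal.ofReal ((1 - ζ^2/k^2)/2) := by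
            rw [lintegral_indicator measurableSet_Icc,
              lint_Icc (f := fun t => t) continuous_id lohi (fun t ht => lo0.trans ht.1)]
            rw [integral_id, e]
    · rw [indicator_of_notMem hz, nonpos_iff_eq_zero]
      rw [show (0:ℝ≥0∞) = ∫⁻ _ : ℝ, 0 by simp]
      refine lintegral_congr fun ρ => ?_
      apply indicator_of_notMem
      intro hw
      obtain ⟨b1, b2⟩ := sub ρ hw
      apply hz
      have hw2 : ζ^2+ρ^2 < 1 := hw.1.2
      rw [hlo, div_le_iff₀ k0] at b1
      have : (s * |ζ|)^2 ≤ (ρ * k)^2 := by gcongr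
      rw [mul_pow, sq_abs, mul_pow, k2] at this
      have : ζ^2 ≤ k^2 := by rw [k2]; nlinarith
      exact abs_le.1 (abs_le_of_sq_le_sq this k0.le)
  have mI : Measurable ((WW ∩ S).indicator (fun w : ℝ × ℝ => ENNReal.ofReal w.2)) :=
    Measurable.indicator (by fun_prop) (WW_meas.inter mS)
  calc JJ h ≤ ∫⁻ w : ℝ × ℝ, (WW ∩ S).indicator (fun w => ENNReal.ofReal w.2) w := a1.trans a2.le
    _ = ∫⁻ ζ : ℝ, ∫⁻ ρ : ℝ, (WW ∩ S).indicator (fun w => ENNReal.ofReal w.2) (ζ, ρ) := by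
        rw [Measure.volume_eq_prod, lintegral_prod _ mI.aemeasurable]
    _ ≤ ∫⁻ ζ, (Icc (-k) k).indicator (fun ζ => ENNReal.ofReal ((1 - ζ^2/k^2)/2)) ζ :=
        lintegral_mono a3
    _ = ENNReal.ofReal (2 * k / 3) := by
        rw [lintegral_indicator measurableSet_Icc, lint_Icc (by fun_prop) (by linarith)]
        · congr 1
          have : ∫ t in (-k)..k, (1 - t^2/k^2)/2 = ∫ t in (-k)..k, (1/2 - 1/(2*k^2) * t^2) := by
            congr 1; ext t; field_simp
          rw [this, intervalIntegral.integral_sub (by simp)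
            (Continuous.intervalIntegrable (by fun_prop) _ _),
            intervalIntegral.integral_const_mul, integral_pow]
          simp; field_simp; ring
        · intro t ht
          have : t^2 ≤ k^2 := by
            rw [← sq_abs t]; have := abs_le.2 ht; gcongr
          have : t^2/k^2 ≤ 1 := by rw [div_le_one (by positivity)]; exact this
          linarith
    _ ≤ _ := by
        apply ENNReal.ofReal_le_ofReal
        have e : h / (3 * (999/1000)) = 1 / (3 * s) := by rw [hs]; field_simp
        rw [e, div_le_div_iff₀ (by norm_num) (by positivity)]
        nlinarith [sq_nonneg (k - s)]


def qq (Γ : ℝ → E3) (t : ℝ) : ℝ := ‖Γ t‖^2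
def q1 (Γ : ℝ → E3) (t : ℝ) : ℝ := ∫ x in (0:ℝ)..t, qq Γ x
def q2 (Γ : ℝ → E3) (t : ℝ) : ℝ := ∫ x in (0:ℝ)..t, q1 Γ x
def Te (Γ : ℝ → E3) (e t : ℝ) : ℝ := (q1 Γ (t+2*e) - 2 * q1 Γ (t+e) + q1 Γ t)/(2*e^2)
def Te' (Γ : ℝ → E3) (e t : ℝ) : ℝ := (qq Γ (t+2*e) - 2 * qq Γ (t+e) + qq Γ t)/(2*e^2)
def Qe (Γ : ℝ → E3) (e t : ℝ) : ℝ := (q2 Γ (t+2*e) - 2 * q2 Γ (t+e) + q2 Γ t)/(e^2)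
def he (Γ : ℝ → E3) (e t : ℝ) : ℝ := √(Qe Γ e t + 120*e - Te Γ e t^2)
def ke (Γ : ℝ → E3) (e t : ℝ) : ℝ := (1 - Te' Γ e t) / he Γ e t

section
variable {Γ : ℝ → E3} {L : ℝ}

theorem qq_cont (h : Good Γ L) : Continuous (qq Γ) := by
  have := h.lip.continuous; unfold qq; fun_prop

theorem q1_deriv (h : Good Γ L) (t : ℝ) : HasDerivAt (q1 Γ) (qq Γ t) t :=
  intervalIntegral.integral_hasDerivAt_right ((qq_cont h).intervalIntegrable _ _)
    ((qq_cont h).stronglyMeasurableAtFilter _ _) (qq_cont h).continuousAt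

theorem q1_cont (h : Good Γ L) : Continuous (q1 Γ) :=
  continuous_iff_continuousAt.2 fun t => (q1_deriv h t).continuousAt

theorem q2_deriv (h : Good Γ L) (t : ℝ) : HasDerivAt (q2 Γ) (q1 Γ t) t :=
  intervalIntegral.integral_hasDerivAt_right ((q1_cont h).intervalIntegrable _ _)
    ((q1_cont h).stronglyMeasurableAtFilter _ _) (q1_cont h).continuousAt

theorem second_deriv {F f : ℝ → ℝ} (hF : ∀ x, HasDerivAt F (f x) x) (e c t : ℝ) :
    HasDerivAt (fun t => (F (t+2*e) - 2 * F (t+e) + F t)/c)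
      ((f (t+2*e) - 2 * f (t+e) + f t)/c) t := by
  have a1 := (hF (t+2*e)).comp_add_const t (2*e)
  have a2 := ((hF (t+e)).comp_add_const t e).const_mul 2
  exact ((a1.sub a2).add (hF t)).div_const c

theorem Te_deriv (h : Good Γ L) (e t : ℝ) : HasDerivAt (Te Γ e) (Te' Γ e t) t :=
  second_deriv (q1_deriv h) e _ t

theorem Qe_deriv (h : Good Γ L) (e t : ℝ) : HasDerivAt (Qe Γ e) (2 * Te Γ e t) t := by
  refine (second_deriv (q2_deriv h) e (e^2) t).congr_deriv ?_
  unfold Te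
  rcases eq_or_ne e 0 with h0 | h0
  · simp [h0]
  · field_simp

theorem mvt1 {F f : ℝ → ℝ} (hF : ∀ x, HasDerivAt F (f x) x) {e : ℝ} (he : 0 < e) (t : ℝ) :
    ∃ ξ ∈ Ioo t (t+e), F (t+2*e) - 2 * F (t+e) + F t = e * (f (ξ+e) - f ξ) := by
  have hd : ∀ x, HasDerivAt (fun x => F (x+e) - F x) (f (x+e) - f x) x := fun x =>
    ((hF (x+e)).comp_add_const x e).sub (hF x)
  obtain ⟨ξ, hξ, e1⟩ := exists_hasDerivAt_eq_slope (fun x => F (x+e) - F x) (fun x => f (x+e) - f x)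
    (show t < t + e by linarith) (continuous_iff_continuousAt.2 fun x => (hd x).continuousAt).continuousOn
    (fun x _ => hd x)
  refine ⟨ξ, hξ, ?_⟩
  rw [e1, show t + e + e = t + 2*e by ring, show t + e - t = e by ring]
  field_simp; ring

theorem mvt0 {F f : ℝ → ℝ} (hF : ∀ x, HasDerivAt F (f x) x) {e : ℝ} (he : 0 < e) (t : ℝ) :
    ∃ ξ ∈ Ioo t (t+e), F (t+e) - F t = e * f ξ := by
  obtain ⟨ξ, hξ, e1⟩ := exists_hasDerivAt_eq_slope F f
    (show t < t + e by linarith) (continuous_iff_continuousAt.2 fun x => (hF x).continuousAt).continuousOn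
    (fun x _ => hF x)
  refine ⟨ξ, hξ, ?_⟩
  rw [e1, show t + e - t = e by ring]
  field_simp

theorem Te_mvt (h : Good Γ L) {e : ℝ} (he : 0 < e) (t : ℝ) :
    ∃ ξ ∈ Ioo t (t+e), Te Γ e t = (qq Γ (ξ+e) - qq Γ ξ)/(2*e) := by
  obtain ⟨ξ, hξ, h1⟩ := mvt1 (q1_deriv h) he t
  refine ⟨ξ, hξ, ?_⟩
  rw [Te, h1]; field_simp

theorem Qe_mvt (h : Good Γ L) {e : ℝ} (he : 0 < e) (t : ℝ) :
    ∃ η ∈ Ioo t (t+2*e), Qe Γ e t = qq Γ η := by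
  obtain ⟨ξ, hξ, h1⟩ := mvt1 (q2_deriv h) he t
  obtain ⟨η, hη, h2⟩ := mvt0 (q1_deriv h) he ξ
  refine ⟨η, ⟨by linarith [hξ.1, hη.1], by linarith [hξ.2, hη.2]⟩, ?_⟩
  rw [Qe, h1, h2]; field_simp

theorem norm_near (h : Good Γ L) (x y : ℝ) : ‖Γ x‖ ≤ ‖Γ y‖ + |x - y| := by
  have := h.lip.dist_le_mul x y
  rw [dist_eq_norm, Real.dist_eq] at this
  have h2 := norm_sub_norm_le (Γ x) (Γ y)
  simp at this
  linarith

theorem Te_bound (h : Good Γ L) {e : ℝ} (he : 0 < e) (t : ℝ) : |Te Γ e t| ≤ ‖Γ t‖ + 2*e := by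
  obtain ⟨ξ, hξ, h1⟩ := Te_mvt h he t
  rw [h1, abs_div, abs_of_pos (show 0 < 2*e by linarith), div_le_iff₀ (by linarith)]
  have a1 := norm_near h (ξ+e) ξ
  have a2 := norm_near h ξ (ξ+e)
  have a3 := norm_near h ξ t
  have a4 := norm_near h (ξ+e) t
  rw [show ξ + e - ξ = e by ring, abs_of_pos he] at a1
  rw [show ξ - (ξ + e) = -e by ring, abs_neg, abs_of_pos he] at a2
  rw [abs_of_pos (by linarith [hξ.1])] at a3 a4
  have p1 := norm_nonneg (Γ ξ)
  have p2 := norm_nonneg (Γ (ξ+e))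
  have b : |‖Γ (ξ+e)‖ - ‖Γ ξ‖| ≤ e := abs_le.2 ⟨by linarith, by linarith⟩
  rw [qq, qq, show ‖Γ (ξ+e)‖^2 - ‖Γ ξ‖^2 = (‖Γ (ξ+e)‖ - ‖Γ ξ‖) * (‖Γ (ξ+e)‖ + ‖Γ ξ‖) by ring,
    abs_mul, abs_of_nonneg (add_nonneg p2 p1)]
  have c : ‖Γ (ξ+e)‖ + ‖Γ ξ‖ ≤ 2*‖Γ t‖ + 3 * e := by linarith [hξ.2]
  calc _ ≤ e * (2*‖Γ t‖ + 3 * e) := by gcongr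
    _ ≤ _ := by nlinarith

theorem Qe_le (h : Good Γ L) {e : ℝ} (he : 0 < e) (t : ℝ) : Qe Γ e t ≤ (‖Γ t‖ + 2*e)^2 := by
  obtain ⟨η, hη, h1⟩ := Qe_mvt h he t
  rw [h1, qq]
  have a3 := norm_near h η t
  rw [abs_of_pos (by linarith [hη.1])] at a3
  have := hη.2
  gcongr
  linarith

theorem Qe_ge (h : Good Γ L) {e : ℝ} (he : 0 < e) (t : ℝ) : ‖Γ t‖^2 - 4*e*‖Γ t‖ ≤ Qe Γ e t := by
  obtain ⟨η, hη, h1⟩ := Qe_mvt h he t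
  rw [h1, qq]
  have a3 := norm_near h t η
  rw [abs_of_neg (by linarith [hη.1])] at a3
  have := hη.2
  have p1 := norm_nonneg (Γ t)
  have p2 := norm_nonneg (Γ η)
  by_cases hc : ‖Γ t‖ ≤ 2*e
  · nlinarith
  · nlinarith

theorem good_norm_le (h : Good Γ L) (h0 : Γ 0 = 0) (t : ℝ) : ‖Γ t‖ ≤ L / 2 := by
  obtain ⟨t', ht', e⟩ := h.window 0 t
  rw [← e]
  have a1 := norm_near h t' 0
  have a2 := norm_near h t' L
  have hL : Γ L = 0 := by have := h.per 0; rw [zero_add] at this; rw [this, h0]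
  have := ht'.2
  rw [h0, norm_zero, sub_zero, abs_of_nonneg ht'.1] at a1
  rw [hL, norm_zero, abs_of_neg (by linarith)] at a2
  linarith

theorem good_L_ge (h : Good Γ L) (h0 : Γ 0 = 0) : 2 ≤ L := by
  obtain ⟨t, ht⟩ := h.hull (EuclideanSpace.single 0 1) (by simp)
  have := real_inner_le_norm (Γ t) (EuclideanSpace.single 0 1)
  have a := good_norm_le h h0 t
  simp only [PiLp.norm_single, norm_one, mul_one] at this
  linarith

theorem good_L_lt (h : Good Γ L) : L < 12.6 := by
  have := h.L_le
  have := Real.pi_lt_d2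
  norm_num at *
  linarith

theorem he_sq_pos (h : Good Γ L) (h0 : Γ 0 = 0) {e : ℝ} (he : 0 < e) (he1 : e ≤ 1/100000) (t : ℝ) :
    0 < Qe Γ e t + 120*e - Te Γ e t^2 := by
  have a1 := Te_bound h he t
  have a2 := Qe_ge h he t
  have a3 := good_norm_le h h0 t
  have a4 := good_L_lt h
  have p1 := norm_nonneg (Γ t)
  have a5 : Te Γ e t^2 ≤ (‖Γ t‖+2*e)^2 := by
    rw [← sq_abs]; gcongr
  norm_num at a4
  nlinarith

theorem he_pos (h : Good Γ L) (h0 : Γ 0 = 0) {e : ℝ} (he0 : 0 < e) (he1 : e ≤ 1/100000) (t : ℝ) :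
    0 < he Γ e t := Real.sqrt_pos.2 (he_sq_pos h h0 he0 he1 t)

theorem he_deriv (h : Good Γ L) (h0 : Γ 0 = 0) {e : ℝ} (he0 : 0 < e) (he1 : e ≤ 1/100000) (t : ℝ) :
    HasDerivAt (he Γ e) (ke Γ e t * Te Γ e t) t := by
  have d := (((Qe_deriv h e t).add_const (120*e)).sub ((Te_deriv h e t).pow 2)).sqrt
    (he_sq_pos h h0 he0 he1 t).ne'
  refine d.congr_deriv ?_
  have hp := he_pos h h0 he0 he1 t
  rw [ke]
  change _ / (2 * he Γ e t) = _
  field_simp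
  push_cast; simp; ring

theorem Te_deriv2 (h : Good Γ L) (h0 : Γ 0 = 0) {e : ℝ} (he0 : 0 < e) (he1 : e ≤ 1/100000) (t : ℝ) :
    HasDerivAt (Te Γ e) (1 - ke Γ e t * he Γ e t) t := by
  refine (Te_deriv h e t).congr_deriv ?_
  have hp := he_pos h h0 he0 he1 t
  rw [ke]; field_simp; ring

theorem ke_nonneg (h : Good Γ L) (h0 : Γ 0 = 0) {e : ℝ} (he0 : 0 < e) (he1 : e ≤ 1/100000) (t : ℝ) :
    0 ≤ ke Γ e t := by
  refine div_nonneg ?_ (Real.sqrt_nonneg _)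
  have := good_second_diff h t he0 (by linarith [good_L_ge h h0])
  rw [Te', sub_nonneg, div_le_one (by positivity)]
  exact this

theorem Te'_cont (h : Good Γ L) (e : ℝ) : Continuous (Te' Γ e) := by
  have := qq_cont h
  unfold Te'; fun_prop

theorem he_cont (h : Good Γ L) (e : ℝ) : Continuous (he Γ e) := by
  have c1 : Continuous (Te Γ e) := continuous_iff_continuousAt.2 fun x => (Te_deriv h e x).continuousAt
  have c2 : Continuous (Qe Γ e) := continuous_iff_continuousAt.2 fun x => (Qe_deriv h e x).continuousAt
  unfold he; fun_prop

theorem ke_cont (h : Good Γ L) (h0 : Γ 0 = 0) {e : ℝ} (he0 : 0 < e) (he1 : e ≤ 1/100000) :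
    Continuous (ke Γ e) := by
  have c2 := Te'_cont h e
  have c1 := he_cont h e
  unfold ke
  exact (continuous_const.sub c2).div c1 fun t => (he_pos h h0 he0 he1 t).ne'

theorem DD_bound (h : Good Γ L) (h0 : Γ 0 = 0) {e : ℝ} (he0 : 0 < e) (he1 : e ≤ 1/100000) :
    ∫⁻ t in Icc 0 L, DD (he Γ e t) (Te Γ e t) ≤ ENNReal.ofReal (2/2.997 * (L - 0.03)) := by
  have hL2 := good_L_ge h h0
  have hL3 := good_L_lt h
  have bd : ∀ t, Γ t = 0 → he Γ e t^2 + Te Γ e t^2 < (999/1000)^2 := by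
    intro t ht
    rw [he, Real.sq_sqrt (he_sq_pos h h0 he0 he1 t).le]
    have := Qe_le h he0 t
    rw [ht, norm_zero] at this
    nlinarith
  have hΓL : Γ L = 0 := by have := h.per 0; rw [zero_add] at this; rw [this, h0]
  rw [DD_int (by linarith) (he_deriv h h0 he0 he1) (Te_deriv2 h h0 he0 he1) (ke_cont h h0 he0 he1)
    (ke_nonneg h h0 he0 he1) (fun t => (he_pos h h0 he0 he1 t).le) (bd 0 h0) (bd L hΓL)]
  set S : Set ℝ := {t | t ∈ Icc 0 L ∧ 999/1000 ≤ he Γ e t} with hS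
  have hSc : IsCompact S := by
    have : S = Icc 0 L ∩ (he Γ e) ⁻¹' (Ici (999/1000)) := rfl
    rw [this]
    exact isCompact_Icc.inter_right (isClosed_Ici.preimage (he_cont h e))
  rcases S.eq_empty_or_nonempty with hSe | hSne
  · have : ∫⁻ t in Icc 0 L, ENNReal.ofReal (2 * ke Γ e t) * JJ (he Γ e t) = 0 := by
      rw [setLIntegral_congr_fun (g := fun _ => 0) measurableSet_Icc]
      · simp
      · intro t ht
        simp only
        rw [JJ_zero (he_pos h h0 he0 he1 t).le, mul_zero]
        by_contra hc
        have : t ∈ S := ⟨ht, (not_le.1 hc).le⟩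
        rw [hSe] at this; exact this
    rw [this]; exact zero_le
  · obtain ⟨t1, ht1, hmin⟩ := hSc.exists_isLeast hSne
    have hT' : ∀ t, 0 ≤ 1 - Te' Γ e t := by
      intro t
      have a := ke_nonneg h h0 he0 he1 t
      have hp := he_pos h h0 he0 he1 t
      rw [ke] at a
      have := mul_nonneg a hp.le
      rwa [div_mul_cancel₀ _ hp.ne'] at this
    have c2 := Te'_cont h e
    calc _ ≤ ∫⁻ t in Icc 0 L, (Icc t1 L).indicator
            (fun t => ENNReal.ofReal (2/2.997 * (1 - Te' Γ e t))) t := by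
          refine setLIntegral_mono_ae' measurableSet_Icc (Filter.Eventually.of_forall fun t ht => ?_)
          by_cases hc : he Γ e t ≤ 999/1000
          · rw [JJ_zero (he_pos h h0 he0 he1 t).le hc, mul_zero]; exact zero_le
          · have hc' := not_le.1 hc
            rw [indicator_of_mem (show t ∈ Icc t1 L from ⟨hmin ⟨ht, hc'.le⟩, ht.2⟩)]
            have hp := he_pos h h0 he0 he1 t
            have hk := ke_nonneg h h0 he0 he1 t
            refine (mul_le_mul_right (JJ_le hc') _).trans ?_
            rw [← ENNReal.ofReal_mul (by positivity)]
            apply ENNReal.ofReal_le_ofReal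
            apply le_of_eq
            rw [ke]; field_simp; norm_num; ring
      _ = ∫⁻ t in Icc t1 L, ENNReal.ofReal (2/2.997 * (1 - Te' Γ e t)) := by
          rw [lintegral_indicator measurableSet_Icc, Measure.restrict_restrict measurableSet_Icc]
          congr 2
          exact inter_eq_left.2 (Icc_subset_Icc_left ht1.1.1)
      _ = ENNReal.ofReal (2/2.997 * (L - t1 - (Te Γ e L - Te Γ e t1))) := by
          rw [lint_Icc (by fun_prop) ht1.1.2 (fun t _ => mul_nonneg (by norm_num) (hT' t))]
          congr 1
          rw [intervalIntegral.integral_const_mul, intervalIntegral.integral_sub (by simp)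
            (c2.intervalIntegrable _ _), intervalIntegral.integral_eq_sub_of_hasDerivAt
            (fun t _ => Te_deriv h e t) (c2.intervalIntegrable _ _)]
          simp
      _ ≤ _ := by
          apply ENNReal.ofReal_le_ofReal
          apply mul_le_mul_of_nonneg_left _ (by norm_num)
          have b1 := (abs_le.1 (Te_bound h he0 L)).1
          rw [hΓL, norm_zero] at b1
          have b2 : Te Γ e t1 ≤ t1 - 0.031 := by
            by_contra hcon
            have hcon := not_le.1 hcon
            have b3 : (999/1000)^2 ≤ he Γ e t1^2 := by
              have := ht1.2; gcongr
            rw [he, Real.sq_sqrt (he_sq_pos h h0 he0 he1 t1).le] at b3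
            have b4 := Qe_le h he0 t1
            have b5 := norm_near h t1 0
            rw [h0, norm_zero, sub_zero, abs_of_nonneg ht1.1.1] at b5
            have b6 : (‖Γ t1‖+2*e)^2 ≤ (t1+2*e)^2 := by gcongr; linarith
            have b7 := ht1.1.2
            have b8 := ht1.1.1
            norm_num at hcon hL3 b3
            have b9 : 9/10 ≤ t1 := by
              by_contra hh
              have hh := not_le.1 hh
              nlinarith [sq_nonneg (Te Γ e t1)]
            have b10 : (t1 - 31/1000)^2 ≤ Te Γ e t1^2 := by gcongr; linarith
            nlinarith
          norm_num at *
          linarith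
end


open Filter Topology in
theorem Te_tendsto {Γ : ℝ → E3} {L : ℝ} (h : Good Γ L) {t : ℝ} (hd : DifferentiableAt ℝ Γ t) :
    Tendsto (fun e => Te Γ e t) (𝓝[>] 0) (𝓝 ⟪Γ t, deriv Γ t⟫) := by
  have hq : HasDerivAt (qq Γ) (2 * ⟪Γ t, deriv Γ t⟫) t := hd.hasDerivAt.norm_sq
  set d := ⟪Γ t, deriv Γ t⟫
  rw [Metric.tendsto_nhdsWithin_nhds]
  intro η hη
  rw [hasDerivAt_iff_isLittleO, Asymptotics.isLittleO_iff] at hq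
  have := hq (show (0:ℝ) < η/2 by linarith)
  rw [Metric.eventually_nhds_iff] at this
  obtain ⟨δ, hδ, hb⟩ := this
  refine ⟨δ/2, by linarith, fun {e} he hed => ?_⟩
  have he0 : 0 < e := he
  rw [Real.dist_eq, sub_zero, abs_of_pos he0] at hed
  obtain ⟨ξ, hξ, h1⟩ := Te_mvt h he0 t
  have x1 := hξ.1
  have x2 := hξ.2
  have b1 := hb (y := ξ) (by rw [Real.dist_eq, abs_of_pos (by linarith)]; linarith)
  have b2 := hb (y := ξ+e) (by rw [Real.dist_eq, abs_of_pos (by linarith)]; linarith)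
  simp only [smul_eq_mul, Real.norm_eq_abs] at b1 b2
  rw [abs_of_pos (show 0 < ξ - t by linarith)] at b1
  rw [abs_of_pos (show 0 < ξ + e - t by linarith)] at b2
  rw [abs_le] at b1 b2
  have c1 : η/2 * (ξ - t) < η/2 * e := by gcongr; linarith
  have c2 : η/2 * (ξ + e - t) < η/2 * (2*e) := by gcongr; linarith
  rw [Real.dist_eq, h1, show (qq Γ (ξ+e) - qq Γ ξ)/(2*e) - d = (qq Γ (ξ+e) - qq Γ ξ - 2*e*d)/(2*e) by
    field_simp, abs_div, abs_of_pos (show 0 < 2*e by linarith), div_lt_iff₀ (by linarith), abs_lt]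
  constructor <;> nlinarith

open Filter Topology in
theorem Qe_tendsto {Γ : ℝ → E3} {L : ℝ} (h : Good Γ L) (t : ℝ) :
    Tendsto (fun e => Qe Γ e t) (𝓝[>] 0) (𝓝 (‖Γ t‖^2)) := by
  have hq := (qq_cont h).tendsto t
  rw [Metric.tendsto_nhds_nhds] at hq
  rw [Metric.tendsto_nhdsWithin_nhds]
  intro η hη
  obtain ⟨δ, hδ, hb⟩ := hq η hη
  refine ⟨δ/2, by linarith, fun {e} he hed => ?_⟩
  have he0 : 0 < e := he
  rw [Real.dist_eq, sub_zero, abs_of_pos he0] at hed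
  obtain ⟨ξ, hξ, h1⟩ := Qe_mvt h he0 t
  rw [h1]
  apply hb
  rw [Real.dist_eq, abs_of_pos (by linarith [hξ.1])]; linarith [hξ.2]

open Filter Topology in
theorem he_tendsto {Γ : ℝ → E3} {L : ℝ} (h : Good Γ L) {t : ℝ} (hd : DifferentiableAt ℝ Γ t) :
    Tendsto (fun e => he Γ e t) (𝓝[>] 0) (𝓝 (√(‖Γ t‖^2 - ⟪Γ t, deriv Γ t⟫^2))) := by
  have h1 : Tendsto (fun e : ℝ => 120 * e) (𝓝[>] 0) (𝓝 0) := by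
    have : Tendsto (fun e : ℝ => 120 * e) (𝓝 0) (𝓝 (120 * 0)) :=
      (by fun_prop : Continuous (fun e : ℝ => 120 * e)).tendsto 0
    rw [mul_zero] at this
    exact this.mono_left nhdsWithin_le_nhds
  have := (((Qe_tendsto h t).add h1).sub ((Te_tendsto h hd).pow 2)).sqrt
  rw [add_zero] at this
  exact this

theorem DD_meas : Measurable (fun p : ℝ × ℝ => DD p.1 p.2) := by
  simp only [DD_eq]
  refine Measurable.lintegral_prod_right'
    (f := fun q : (ℝ × ℝ) × (ℝ × ℝ) => AA (ccW q.2) q.1.1 q.1.2) ?_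
  have mc := ccW_meas
  have m : Measurable (fun q : (ℝ × ℝ) × (ℝ × ℝ) => (ccW q.2, q.1.1, q.1.2)) := by fun_prop
  exact AA_meas.comp m

open Filter Topology in
theorem DD_fatou {a b : ℕ → ℝ} {x y : ℝ} (ha : Tendsto a atTop (𝓝 x)) (hb : Tendsto b atTop (𝓝 y)) :
    DD x y ≤ liminf (fun n => DD (a n) (b n)) atTop := by
  have m3 : Measurable (deriv chi) := chi_deriv_cont.measurable
  unfold DD
  refine le_trans (le_of_eq ?_) (lintegral_liminf_le (fun n => ?_))
  · refine lintegral_congr fun w => ?_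
    symm
    apply Tendsto.liminf_eq
    apply ENNReal.tendsto_ofReal
    apply Tendsto.mul_const
    apply (chi_deriv_cont.tendsto _).comp
    exact ((ha.mul_const _).add (hb.mul_const _)).const_mul _
  · apply Measurable.ennreal_ofReal
    exact (m3.comp (by fun_prop)).mul (by fun_prop)

open Filter Topology in
theorem good_ne_zero0 {Γ : ℝ → E3} {L : ℝ} (h : Good Γ L) : Γ 0 ≠ 0 := by
  intro h0
  set ε : ℕ → ℝ := fun n => 1/100000 * (1 / ((n:ℝ) + 1)) with hε
  have e0 : ∀ n, 0 < ε n := fun n => by positivity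
  have e1 : ∀ n, ε n ≤ 1/100000 := fun n => by
    have : 1 / ((n:ℝ)+1) ≤ 1 := by
      rw [div_le_one (by positivity)]; linarith [(Nat.cast_nonneg n : (0:ℝ) ≤ n)]
    simp only [hε]; linarith
  have et : Tendsto ε atTop (𝓝[>] 0) := by
    rw [tendsto_nhdsWithin_iff]
    refine ⟨?_, Eventually.of_forall e0⟩
    have := (tendsto_one_div_add_atTop_nhds_zero_nat (𝕜 := ℝ)).const_mul (1/100000 : ℝ)
    rwa [mul_zero] at this
  have hle : 2 * volume (Metric.ball (0:E3) 1) ≤ ENNReal.ofReal (2/2.997 * (L - 0.03)) := by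
    calc _ ≤ ∫⁻ t in Icc 0 L, DD (√(‖Γ t‖^2 - ⟪Γ t, deriv Γ t⟫^2)) ⟪Γ t, deriv Γ t⟫ := good_avg h h0
      _ ≤ ∫⁻ t in Icc 0 L, liminf (fun n => DD (he Γ (ε n) t) (Te Γ (ε n) t)) atTop := by
          refine lintegral_mono_ae ?_
          filter_upwards [ae_restrict_of_ae (good_ae_diff h)] with t ht
          exact DD_fatou ((he_tendsto h ht).comp et) ((Te_tendsto h ht).comp et)
      _ ≤ liminf (fun n => ∫⁻ t in Icc 0 L, DD (he Γ (ε n) t) (Te Γ (ε n) t)) atTop := by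
          refine lintegral_liminf_le (fun n => ?_)
          have c1 : Continuous (Te Γ (ε n)) :=
            continuous_iff_continuousAt.2 fun x => (Te_deriv h (ε n) x).continuousAt
          exact DD_meas.comp ((he_cont h (ε n)).measurable.prodMk c1.measurable)
      _ ≤ liminf (fun _ : ℕ => ENNReal.ofReal (2/2.997 * (L - 0.03))) atTop :=
          liminf_le_liminf (Eventually.of_forall fun n => DD_bound h h0 (e0 n) (e1 n))
      _ = _ := by simp
  rw [EuclideanSpace.volume_ball_fin_three] at hle
  have hL := h.L_le
  have p1 := Real.pi_lt_d2
  have p2 := Real.pi_gt_three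
  rw [show (2:ℝ≥0∞) = ENNReal.ofReal 2 by simp, show ENNReal.ofReal 1 = 1 by simp, one_pow, one_mul,
    ← ENNReal.ofReal_mul (by norm_num), ENNReal.ofReal_le_ofReal_iff' ] at hle
  norm_num at *
  rcases hle with hle | hle <;> linarith

theorem good_ne_zero {Γ : ℝ → E3} {L : ℝ} (h : Good Γ L) (t : ℝ) : Γ t ≠ 0 := by
  have := good_ne_zero0 (h.shift t)
  simpa using this


def hatG (Γ : ℝ → E3) (t : ℝ) : E3 := ‖Γ t‖⁻¹ • Γ t
def Th (Γ : ℝ → E3) (t : ℝ) : ℝ := variationOnFromTo (hatG Γ) univ 0 t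
def pol (r θ : ℝ) : E2 := r • (WithLp.equiv 2 (Fin 2 → ℝ)).symm ![Real.cos θ, Real.sin θ]

theorem pol_zero (r θ : ℝ) : pol r θ 0 = r * Real.cos θ := by simp [pol]
theorem pol_one (r θ : ℝ) : pol r θ 1 = r * Real.sin θ := by simp [pol]

theorem pol_dist_sq (r₁ θ₁ r₂ θ₂ : ℝ) :
    dist (pol r₁ θ₁) (pol r₂ θ₂) ^ 2 = (r₁ - r₂)^2 + 2 * (r₁ * r₂) * (1 - Real.cos (θ₁ - θ₂)) := by
  rw [EuclideanSpace.dist_eq, Real.sq_sqrt (by positivity), Fin.sum_univ_two, Real.dist_eq, Real.dist_eq,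
    sq_abs, sq_abs, pol_zero, pol_zero, pol_one, pol_one, Real.cos_sub]
  linear_combination r₁^2 * Real.sin_sq_add_cos_sq θ₁ + r₂^2 * Real.sin_sq_add_cos_sq θ₂

section
variable {Γ : ℝ → E3} {L : ℝ}

theorem good_m0 (h : Good Γ L) : ∃ m0 : ℝ, 0 < m0 ∧ ∀ t, m0 ≤ ‖Γ t‖ := by
  obtain ⟨z, hz, hmin⟩ := isCompact_Icc.exists_isMinOn (⟨0, by simp [h.pos.le]⟩ : (Icc (0:ℝ) L).Nonempty)
    (h.lip.continuous.norm.continuousOn)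
  refine ⟨‖Γ z‖, norm_pos_iff.2 (good_ne_zero h z), fun t => ?_⟩
  obtain ⟨t', ht', e⟩ := h.window 0 t
  rw [← e]
  exact hmin ⟨ht'.1, by linarith [ht'.2]⟩

theorem hat_norm (h : Good Γ L) (t : ℝ) : ‖hatG Γ t‖ = 1 := by
  have := norm_pos_iff.2 (good_ne_zero h t)
  simp [hatG, norm_smul, this.ne']

theorem hat_smul (h : Good Γ L) (t : ℝ) : ‖Γ t‖ • hatG Γ t = Γ t := by
  have := norm_pos_iff.2 (good_ne_zero h t)
  simp [hatG, smul_smul, this.ne']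

theorem smul_hat_dist (h : Good Γ L) (a b x y : ℝ) :
    dist (a • hatG Γ x) (b • hatG Γ y) ^ 2 = (a - b)^2 + a * b * dist (hatG Γ x) (hatG Γ y)^2 := by
  rw [dist_eq_norm, norm_sq_smul_sub, hat_norm h, hat_norm h, dist_eq_norm]; ring

theorem hat_dist_sq (h : Good Γ L) (x y : ℝ) :
    dist (Γ x) (Γ y) ^ 2 = (‖Γ x‖ - ‖Γ y‖)^2 + ‖Γ x‖ * ‖Γ y‖ * dist (hatG Γ x) (hatG Γ y)^2 := by
  rw [← smul_hat_dist h, hat_smul h, hat_smul h]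

theorem hat_dist_le (h : Good Γ L) {m x y : ℝ} (hm : 0 < m) (hx : m ≤ ‖Γ x‖) (hy : m ≤ ‖Γ y‖)
    (hxy : x ≤ y) : dist (hatG Γ x) (hatG Γ y) ≤ (y - x) / m := by
  have h1 := hat_dist_sq h x y
  have h2 := h.dist_le x y hxy
  rw [le_div_iff₀ hm]
  have h3 : (0:ℝ) ≤ dist (Γ x) (Γ y) := dist_nonneg
  have h4 : m * m ≤ ‖Γ x‖ * ‖Γ y‖ := by gcongr
  refine abs_le_of_sq_le_sq' ?_ (by linarith) |>.2
  nlinarith [sq_nonneg (dist (hatG Γ x) (hatG Γ y)), sq_nonneg (‖Γ x‖ - ‖Γ y‖),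
    mul_le_mul_of_nonneg_right h4 (sq_nonneg (dist (hatG Γ x) (hatG Γ y)))]

theorem hat_lip (h : Good Γ L) : ∃ K : ℝ≥0, LipschitzWith K (hatG Γ) := by
  obtain ⟨m, hm, hr⟩ := good_m0 h
  refine ⟨⟨1/m, by positivity⟩, LipschitzWith.of_dist_le_mul fun x y => ?_⟩
  change _ ≤ 1 / m * _
  rcases le_total x y with hxy | hxy
  · have := hat_dist_le h hm (hr x) (hr y) hxy
    rw [Real.dist_eq, abs_sub_comm, abs_of_nonneg (by linarith)]
    exact this.trans (by rw [div_eq_mul_one_div, mul_comm])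
  · have := hat_dist_le h hm (hr y) (hr x) hxy
    rw [dist_comm, Real.dist_eq, abs_of_nonneg (by linarith)]
    exact this.trans (by rw [div_eq_mul_one_div, mul_comm])

theorem hat_lbv (h : Good Γ L) : LocallyBoundedVariationOn (hatG Γ) univ := by
  obtain ⟨K, hK⟩ := hat_lip h
  exact (hK.lipschitzOnWith (s := univ)).locallyBoundedVariationOn

theorem Th_sub_eq (h : Good Γ L) {x y : ℝ} (hxy : x ≤ y) :
    Th Γ y - Th Γ x = (eVariationOn (hatG Γ) (Icc x y)).toReal := by
  unfold Th
  rw [variationOnFromTo.sub_right (hat_lbv h) (mem_univ _) (mem_univ _) (mem_univ _),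
    variationOnFromTo.eq_of_le _ _ hxy, univ_inter]

theorem hat_var_ne_top (h : Good Γ L) (x y : ℝ) : eVariationOn (hatG Γ) (Icc x y) ≠ ⊤ := by
  have := hat_lbv h x y (mem_univ _) (mem_univ _)
  rwa [univ_inter] at this

theorem Th_dist (h : Good Γ L) {x y : ℝ} (hxy : x ≤ y) :
    dist (hatG Γ x) (hatG Γ y) ≤ Th Γ y - Th Γ x := by
  rw [Th_sub_eq h hxy, dist_edist]
  exact ENNReal.toReal_mono (hat_var_ne_top h x y)
    (eVariationOn.edist_le _ (left_mem_Icc.2 hxy) (right_mem_Icc.2 hxy))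

theorem Th_mono (h : Good Γ L) : Monotone (Th Γ) := fun x y hxy => by
  have := Th_dist h hxy
  have h2 : (0:ℝ) ≤ dist (hatG Γ x) (hatG Γ y) := dist_nonneg
  linarith

theorem Th_le (h : Good Γ L) {P : ℝ → ℝ} {x y : ℝ} (hxy : x ≤ y)
    (hP : ∀ a b, x ≤ a → a ≤ b → b ≤ y → dist (hatG Γ a) (hatG Γ b) ≤ P b - P a) :
    Th Γ y - Th Γ x ≤ P y - P x := by
  rw [Th_sub_eq h hxy]
  have h0 : 0 ≤ P y - P x := dist_nonneg.trans (hP x y le_rfl hxy le_rfl)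
  exact ENNReal.toReal_le_of_le_ofReal h0 (eVar_le_of_dist hxy hP)

theorem norm_lip (h : Good Γ L) {x y : ℝ} (hxy : x ≤ y) : |‖Γ y‖ - ‖Γ x‖| ≤ y - x := by
  have h1 := norm_near h x y
  have h2 := norm_near h y x
  rw [abs_le]
  rw [abs_of_nonpos (by linarith : x - y ≤ 0)] at h1
  rw [abs_of_nonneg (by linarith : 0 ≤ y - x)] at h2
  constructor <;> linarith

/-- Lemma A. -/
theorem Th_A (h : Good Γ L) {m x y : ℝ} (hxy : x ≤ y) (hm : 0 < m) (hr : ∀ t ∈ Icc x y, m ≤ ‖Γ t‖) :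
    (‖Γ y‖ - ‖Γ x‖)^2 + m^2 * (Th Γ y - Th Γ x)^2 ≤ (y - x)^2 := by
  have key : ∀ c w : ℝ, 0 < w → c^2 + w^2 = 1 →
      c * (‖Γ y‖ - ‖Γ x‖) + w * (m * (Th Γ y - Th Γ x)) ≤ y - x := by
    intro c w hw hcw
    have := Th_le h (P := fun t => (t - c * ‖Γ t‖) / (w * m)) hxy (fun a b ha hab hb => by
      rw [← sub_div, le_div_iff₀ (by positivity)]
      have h1 := hat_dist_sq h a b
      have h2 := h.dist_le a b hab
      have h4 : m * m ≤ ‖Γ a‖ * ‖Γ b‖ := by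
        have := hr a ⟨ha, hab.trans hb⟩
        have := hr b ⟨ha.trans hab, hb⟩
        gcongr
      set d := dist (hatG Γ a) (hatG Γ b)
      set D := dist (Γ a) (Γ b)
      have hd : 0 ≤ d := dist_nonneg
      have hD : 0 ≤ D := dist_nonneg
      have h5 : (‖Γ b‖ - ‖Γ a‖)^2 + (m * d)^2 ≤ (b - a)^2 := by
        nlinarith [mul_le_mul_of_nonneg_right h4 (sq_nonneg d)]
      have h6 : c * (‖Γ b‖ - ‖Γ a‖) + w * (m * d) ≤ b - a := by
        refine abs_le_of_sq_le_sq' ?_ (by linarith) |>.2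
        nlinarith [sq_nonneg (c * (m * d) - w * (‖Γ b‖ - ‖Γ a‖))]
      linarith)
    rw [← sub_div, le_div_iff₀ (by positivity)] at this
    linarith
  have hT : 0 ≤ Th Γ y - Th Γ x := sub_nonneg.2 (Th_mono h hxy)
  have hn := norm_lip h hxy
  rcases hT.eq_or_lt with hT0 | hT0
  · rw [← hT0]
    have := sq_le_sq' (neg_le_of_abs_le hn) (le_of_abs_le hn)
    linarith
  set A := ‖Γ y‖ - ‖Γ x‖
  set B := m * (Th Γ y - Th Γ x) with hB
  have hB0 : 0 < B := by positivity
  have hN : 0 < √(A^2 + B^2) := Real.sqrt_pos.2 (by positivity)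
  have hN2 : √(A^2 + B^2)^2 = A^2 + B^2 := Real.sq_sqrt (by positivity)
  set N := √(A^2 + B^2)
  have := key (A / N) (B / N) (by positivity) (by field_simp; linarith)
  have h3 : A / N * A + B / N * B = N := by field_simp; linarith
  have h4 : N ≤ y - x := by linarith
  have h5 : N^2 ≤ (y-x)^2 := by gcongr
  nlinarith
end


section
variable {Γ : ℝ → E3} {L : ℝ}

def gt (Γ : ℝ → E3) (t : ℝ) : E2 := pol ‖Γ t‖ (Th Γ t)

theorem Th_lip (h : Good Γ L) {m x y : ℝ} (hxy : x ≤ y) (hm : 0 < m) (hr : ∀ t, m ≤ ‖Γ t‖) :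
    Th Γ y - Th Γ x ≤ (y - x) / m := by
  have h1 := Th_A h hxy hm (fun t _ => hr t)
  rw [le_div_iff₀ hm]
  refine abs_le_of_sq_le_sq' ?_ (by linarith) |>.2
  nlinarith [sq_nonneg (‖Γ y‖ - ‖Γ x‖)]

theorem Th_cont (h : Good Γ L) : Continuous (Th Γ) := by
  obtain ⟨m, hm, hr⟩ := good_m0 h
  refine LipschitzWith.continuous (K := ⟨1/m, by positivity⟩) (LipschitzWith.of_dist_le_mul fun x y => ?_)
  change _ ≤ 1 / m * _
  rcases le_total x y with hxy | hxy
  · have := Th_lip h hxy hm hr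
    have h2 := Th_mono h hxy
    rw [Real.dist_eq, Real.dist_eq, abs_sub_comm, abs_sub_comm x, abs_of_nonneg (by linarith), abs_of_nonneg (by linarith)]
    exact this.trans (by rw [div_eq_mul_one_div, mul_comm])
  · have := Th_lip h hxy hm hr
    have h2 := Th_mono h hxy
    rw [Real.dist_eq, Real.dist_eq, abs_of_nonneg (by linarith), abs_of_nonneg (by linarith)]
    exact this.trans (by rw [div_eq_mul_one_div, mul_comm])

theorem gt_lip (h : Good Γ L) {x y : ℝ} (hxy : x ≤ y) : dist (gt Γ x) (gt Γ y) ≤ y - x := by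
  obtain ⟨m0, hm0, hr⟩ := good_m0 h
  have key : ∀ δ : ℝ, 0 < δ → dist (gt Γ x) (gt Γ y) ≤ (1 + δ / m0) * y - (1 + δ/m0) * x := by
    intro δ hδ
    refine local_to_global (f := gt Γ) (P := fun t => (1 + δ/m0) * t) (s := x) (u := y) hδ ?_ x y le_rfl hxy le_rfl
    intro a b _ hab _ hd
    obtain ⟨z, hz, hmin⟩ := isCompact_Icc.exists_isMinOn (nonempty_Icc.2 hab)
      (h.lip.continuous.norm.continuousOn)
    have hA := Th_A h hab (norm_pos_iff.2 (good_ne_zero h z)) (fun t ht => hmin ht)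
    have h1 : ‖Γ a‖ ≤ ‖Γ z‖ + δ := by
      have := norm_near h a z
      rw [abs_of_nonpos (by linarith [hz.1])] at this
      linarith [hz.2]
    have h2 : ‖Γ b‖ ≤ ‖Γ z‖ + δ := by
      have := norm_near h b z
      rw [abs_of_nonneg (by linarith [hz.2])] at this
      linarith [hz.1]
    set m := ‖Γ z‖
    have hm : m0 ≤ m := hr z
    have h3 : m + δ ≤ m * (1 + δ/m0) := by
      have : δ ≤ m * (δ / m0) := by
        rw [← mul_div_assoc, le_div_iff₀ hm0]; nlinarith
      nlinarith
    have h4 : ‖Γ a‖ * ‖Γ b‖ ≤ (m * (1 + δ/m0)) * (m * (1 + δ/m0)) := by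
      have := h1.trans h3
      have := h2.trans h3
      gcongr
    have hk : 1 ≤ 1 + δ / m0 := by have : 0 < δ / m0 := by positivity
                                   linarith
    set k := 1 + δ / m0
    have h5 := pol_dist_sq ‖Γ a‖ (Th Γ a) ‖Γ b‖ (Th Γ b)
    have h6 := Real.one_sub_sq_div_two_le_cos (x := Th Γ a - Th Γ b)
    set T := Th Γ b - Th Γ a with hT
    have hT' : Th Γ a - Th Γ b = -T := by simp [hT]
    rw [hT'] at h5 h6
    have h7 : 2 * (‖Γ a‖ * ‖Γ b‖) * (1 - Real.cos (-T)) ≤ ‖Γ a‖ * ‖Γ b‖ * T^2 := by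
      have : 0 ≤ ‖Γ a‖ * ‖Γ b‖ := by positivity
      nlinarith
    have h8 : ‖Γ a‖ * ‖Γ b‖ * T^2 ≤ (m * k) * (m * k) * T^2 := by gcongr
    have h9 : (‖Γ a‖ - ‖Γ b‖)^2 ≤ k^2 * (‖Γ b‖ - ‖Γ a‖)^2 := by
      have hk2 : 1 ≤ k^2 := one_le_pow₀ hk
      nlinarith [mul_le_mul_of_nonneg_right hk2 (sq_nonneg (‖Γ a‖ - ‖Γ b‖))]
    have h10 : dist (gt Γ a) (gt Γ b)^2 ≤ (k * (b - a))^2 := by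
      unfold gt
      nlinarith [sq_nonneg k]
    have := abs_le_of_sq_le_sq' h10 (mul_nonneg (by linarith) (by linarith)) |>.2
    linarith
  refine le_of_forall_pos_le_add fun ε hε => ?_
  have hy : 0 < y - x + 1 := by linarith
  refine (key (ε * m0 / (y - x + 1)) (by positivity)).trans ?_
  have : ε * m0 / (y - x + 1) / m0 = ε / (y - x + 1) := by field_simp
  rw [this]
  have h2 : ε / (y - x + 1) * (y - x) ≤ ε := by
    rw [div_mul_eq_mul_div, div_le_iff₀ hy]; nlinarith
  nlinarith

theorem gt_cont (h : Good Γ L) : Continuous (gt Γ) := by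
  refine LipschitzWith.continuous (K := 1) (LipschitzWith.of_dist_le_mul fun x y => ?_)
  rw [NNReal.coe_one, one_mul]
  rcases le_total x y with hxy | hxy
  · rw [Real.dist_eq, abs_sub_comm, abs_of_nonneg (by linarith)]
    exact gt_lip h hxy
  · rw [dist_comm, Real.dist_eq, abs_of_nonneg (by linarith)]
    exact gt_lip h hxy

theorem cos_est {η u : ℝ} (hη : 0 ≤ η) (h1 : η ≤ 1) (hu : u^2 ≤ η) :
    u^2 ≤ (1 + η)^2 * (2 * (1 - Real.cos u)) := by
  have hu1 : |u| ≤ 1 := by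
    rw [← sq_le_one_iff_abs_le_one]; linarith
  have h2 := (abs_le.1 (Real.cos_bound hu1)).2
  have h3 : |u|^4 = u^2 * u^2 := by
    rw [show |u|^4 = (|u|^2)^2 by ring, sq_abs]; ring
  rw [h3] at h2
  have h4 : u^2 * (1 - η * (10/96)) ≤ 2 * (1 - Real.cos u) := by nlinarith [sq_nonneg u]
  have h5 : 1 ≤ (1 + η)^2 * (1 - η * (10/96)) := by nlinarith [sq_nonneg η, mul_nonneg hη (sub_nonneg.2 h1), mul_nonneg (sq_nonneg η) (sub_nonneg.2 h1)]
  have h6 := mul_le_mul_of_nonneg_left h4 (sq_nonneg (1 + η))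
  nlinarith [mul_le_mul_of_nonneg_right h5 (sq_nonneg u)]

/-- (i): radial rivals compare with the planar length. -/
theorem radial_len (h : Good Γ L) {s u : ℝ} (hsu : s ≤ u) (hu : u ≤ s + L) {ρ P : ℝ → ℝ}
    (hc : ContinuousOn ρ (Icc s u)) (hρ : ∀ t ∈ Icc s u, ‖Γ t‖ ≤ ρ t) (hs : ρ s = ‖Γ s‖) (he : ρ u = ‖Γ u‖)
    (hP : ∀ x y, s ≤ x → x ≤ y → y ≤ u → dist (pol (ρ x) (Th Γ x)) (pol (ρ y) (Th Γ y)) ≤ P y - P x) :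
    u - s ≤ P u - P s := by
  obtain ⟨m0, hm0, hr⟩ := good_m0 h
  have hP0 : 0 ≤ P u - P s := dist_nonneg.trans (hP s u le_rfl hsu le_rfl)
  have key : ∀ η : ℝ, 0 < η → η ≤ 1 → u - s ≤ (1 + η) * (P u - P s) := by
    intro η hη hη1
    refine h.rival_le hsu hu (β := fun t => ρ t • hatG Γ t) ?_ ?_ ?_ ?_ (V := (1 + η) * (P u - P s)) (by positivity) ?_
    · obtain ⟨K, hK⟩ := hat_lip h
      exact hc.smul hK.continuous.continuousOn
    · intro t ht
      have h0 := norm_pos_iff.2 (good_ne_zero h t)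
      refine ⟨ρ t / ‖Γ t‖, (one_le_div h0).2 (hρ t ht), ?_⟩
      simp only [hatG, smul_smul, div_eq_mul_inv]
    · simp only [hs, hat_smul h]
    · simp only [he, hat_smul h]
    · have := eVar_le_of_dist (f := fun t => ρ t • hatG Γ t) (P := fun t => (1 + η) * P t) hsu
        (local_to_global (δ := m0 * η) (by positivity) ?_)
      · simpa only [mul_sub] using this
      · intro x y hx hxy hy hd
        have h1 := hP x y hx hxy hy
        have h2 := pol_dist_sq (ρ x) (Th Γ x) (ρ y) (Th Γ y)
        have h3 := smul_hat_dist h (ρ x) (ρ y) x y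
        have h4 := Th_dist h hxy
        have h5 := Th_lip h hxy hm0 hr
        have h6 : (y - x) / m0 ≤ η := by rw [div_le_iff₀ hm0]; linarith
        have h7 : 0 ≤ Th Γ y - Th Γ x := sub_nonneg.2 (Th_mono h hxy)
        have h8 := cos_est hη.le hη1 (u := Th Γ x - Th Γ y) (by nlinarith)
        have h9 : 0 ≤ ρ x * ρ y := by
          have := (norm_nonneg _).trans (hρ x ⟨hx, hxy.trans hy⟩)
          have := (norm_nonneg _).trans (hρ y ⟨hx.trans hxy, hy⟩)
          positivity
        have h10 : dist (hatG Γ x) (hatG Γ y)^2 ≤ (Th Γ x - Th Γ y)^2 := by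
          have h0 : (0:ℝ) ≤ dist (hatG Γ x) (hatG Γ y) := dist_nonneg
          nlinarith
        set D := dist (pol (ρ x) (Th Γ x)) (pol (ρ y) (Th Γ y))
        have hD : 0 ≤ D := dist_nonneg
        have h11 : dist (ρ x • hatG Γ x) (ρ y • hatG Γ y)^2 ≤ ((1 + η) * D)^2 := by
          rw [h3, mul_pow, h2]
          have := mul_le_mul_of_nonneg_left (h10.trans h8) h9
          nlinarith [sq_nonneg (ρ x - ρ y), mul_nonneg hη.le (sq_nonneg (ρ x - ρ y)), mul_nonneg (sq_nonneg η) (sq_nonneg (ρ x - ρ y))]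
        have := abs_le_of_sq_le_sq' h11 (by positivity) |>.2
        nlinarith
  refine le_of_forall_pos_le_add fun ε hε => ?_
  have hy : 0 < P u - P s + 1 := by linarith
  have h1 := key (min 1 (ε / (P u - P s + 1))) (by positivity) (min_le_left _ _)
  have h2 : ε / (P u - P s + 1) * (P u - P s) ≤ ε := by
    rw [div_mul_eq_mul_div, div_le_iff₀ hy]; nlinarith
  have h3 := mul_le_mul_of_nonneg_right (min_le_right 1 (ε / (P u - P s + 1))) hP0
  linarith

theorem strict_core (h : Good Γ L) {s m : ℝ} (hsm : s < m) (hL : m - s ≤ L)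
    (hc : ∀ t ∈ Icc s m, hatG Γ t = hatG Γ s) (hmax : ∀ t ∈ Icc s m, ‖Γ t‖ ≤ ‖Γ m‖) : False := by
  have hTh : ∀ t ∈ Icc s m, Th Γ t = Th Γ s := by
    intro t ht
    have := Th_le h (P := fun _ => 0) ht.1 (fun a b ha hab hb => by
      rw [hc a ⟨ha, by linarith [ht.2]⟩, hc b ⟨by linarith, by linarith [ht.2]⟩]; simp)
    have h2 := Th_mono h ht.1
    linarith
  have hrm := norm_lip h hsm.le
  have hsm1 : m - s ≤ ‖Γ m‖ - ‖Γ s‖ := by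
    have hs1 := hmax s ⟨le_rfl, hsm.le⟩
    have := radial_len h hsm.le (by linarith) (ρ := fun t => min ‖Γ m‖ (‖Γ s‖ + (t - s)))
      (P := fun t => min ‖Γ m‖ (‖Γ s‖ + (t - s))) (by fun_prop) ?_ ?_ ?_ ?_
    · simp only [sub_self, add_zero] at this
      rw [min_eq_left (by linarith [le_of_abs_le hrm]), min_eq_right hs1] at this
      exact this
    · intro t ht
      have := norm_lip h ht.1
      exact le_min (hmax t ht) (by linarith [le_of_abs_le this])
    · simp [hs1]
    · exact min_eq_left (by linarith [le_of_abs_le hrm])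
    · intro x y hx hxy hy
      rw [hTh x ⟨hx, by linarith⟩, hTh y ⟨by linarith, hy⟩]
      have h1 : min ‖Γ m‖ (‖Γ s‖ + (x - s)) ≤ min ‖Γ m‖ (‖Γ s‖ + (y - s)) := by gcongr
      refine abs_le_of_sq_le_sq' ?_ (by linarith) |>.2
      rw [pol_dist_sq]
      simp only [sub_self, Real.cos_zero]
      nlinarith
  have hm : ‖Γ m‖ = ‖Γ s‖ + (m - s) := by linarith [le_of_abs_le hrm]
  have hr0 := norm_pos_iff.2 (good_ne_zero h s)
  have hlt : m - s < L := by
    refine lt_of_le_of_ne hL fun e => ?_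
    have := h.per s
    rw [← e, show s + (m - s) = m by ring] at this
    rw [this] at hm; linarith
  have key : ∀ v, 0 < v → v ≤ L - (m - s) → ‖Γ (s - v)‖^2 ≤ (‖Γ s‖ - v)^2 := by
    intro v hv hvL
    have := good_concave h (s := s - v) (t := s) (u := m) (by linarith) hsm (by linarith)
    have e1 : (‖Γ m‖^2 - ‖Γ s‖^2) / (m - s) = 2 * ‖Γ s‖ + (m - s) := by
      have : m - s ≠ 0 := by linarith
      rw [hm]; field_simp; ring
    rw [e1, show s - (s - v) = v by ring] at this
    have h2 : 2 * ‖Γ s‖ - v ≤ (‖Γ s‖^2 - ‖Γ (s-v)‖^2) / v := by linarith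
    rw [le_div_iff₀ hv] at h2
    nlinarith
  have h1 := key (L - (m - s)) (by linarith) le_rfl
  have e := h.per (s - (L - (m - s)))
  rw [show s - (L - (m - s)) + L = m by ring] at e
  rw [← e, hm] at h1
  have h2 : ‖Γ s‖ ≤ L - (m - s) := by
    by_contra hcon
    push Not at hcon
    nlinarith
  have h3 := key ‖Γ s‖ hr0 h2
  have h4 := norm_pos_iff.2 (good_ne_zero h (s - ‖Γ s‖))
  nlinarith

theorem Th_strict (h : Good Γ L) : StrictMono (Th Γ) := by
  intro s u' hsu'
  by_contra hcon
  obtain ⟨u, hsu, huu, huL⟩ : ∃ u, s < u ∧ u ≤ u' ∧ u - s ≤ L :=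
    ⟨min u' (s + L), lt_min hsu' (by linarith [h.pos]), min_le_left _ _, by linarith [min_le_right u' (s+L)]⟩
  have hTe : Th Γ u' ≤ Th Γ s := not_lt.1 hcon
  have hc : ∀ t ∈ Icc s u, hatG Γ t = hatG Γ s := by
    intro t ht
    have h1 := Th_dist h ht.1
    have h2 := Th_mono h (ht.2.trans huu)
    have h3 : dist (hatG Γ s) (hatG Γ t) = 0 := le_antisymm (by linarith) dist_nonneg
    exact (dist_eq_zero.1 h3).symm
  obtain ⟨m, hm, hmax⟩ := isCompact_Icc.exists_isMaxOn (nonempty_Icc.2 hsu.le)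
      (h.lip.continuous.norm.continuousOn)
  rcases hm.1.eq_or_lt with e | hlt
  · refine strict_core h.rev (s := -u) (m := -s) (by linarith) (by linarith) ?_ ?_
    · intro t ht
      change hatG Γ (-t) = hatG Γ (- -u)
      rw [hc (-t) ⟨by linarith [ht.2], by linarith [ht.1]⟩, hc (- - u) ⟨by linarith, by linarith⟩]
    · intro t ht
      simp only [neg_neg]
      rw [e]
      exact hmax (a := -t) ⟨by linarith [ht.2], by linarith [ht.1]⟩
  · exact strict_core h hlt (by linarith [hm.2]) (fun t ht => hc t ⟨ht.1, ht.2.trans hm.2⟩)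
      (fun t ht => hmax ⟨ht.1, ht.2.trans hm.2⟩)
end


section
variable {Γ : ℝ → E3} {L : ℝ}

def dt (p q : E2) : ℝ := p 0 * q 1 - p 1 * q 0

theorem dt_pol (r₁ θ₁ r₂ θ₂ : ℝ) : dt (pol r₁ θ₁) (pol r₂ θ₂) = r₁ * r₂ * Real.sin (θ₂ - θ₁) := by
  simp only [dt, pol_zero, pol_one, Real.sin_sub]; ring

theorem dt_cramer (A B v : E2) : dt A B • v = dt v B • A + dt A v • B := by
  ext i
  fin_cases i <;> simp [dt] <;> ring

theorem dt_lin_left (x y : ℝ) (A B v : E2) : dt (x • A + y • B) v = x * dt A v + y * dt B v := by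
  simp [dt]; ring
theorem dt_lin_right (x y : ℝ) (A B v : E2) : dt v (x • A + y • B) = x * dt v A + y * dt v B := by
  simp [dt]; ring
theorem dt_self (A : E2) : dt A A = 0 := by simp [dt]; ring

theorem dt_cont : Continuous (fun p : E2 × E2 => dt p.1 p.2) := by
  unfold dt; fun_prop

theorem dt_gt_nonneg {x y : ℝ} (hxy : Th Γ x ≤ Th Γ y) (hπ : Th Γ y - Th Γ x < π) :
    0 ≤ dt (gt Γ x) (gt Γ y) := by
  unfold gt
  rw [dt_pol]
  have := Real.sin_nonneg_of_nonneg_of_le_pi (sub_nonneg.2 hxy) hπ.le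
  positivity

theorem dt_gt_pos (h : Good Γ L) {x y : ℝ} (hxy : x < y) (hπ : Th Γ y - Th Γ x < π) :
    0 < dt (gt Γ x) (gt Γ y) := by
  unfold gt
  rw [dt_pol]
  have := Real.sin_pos_of_pos_of_lt_pi (sub_pos.2 (Th_strict h hxy)) hπ
  have := norm_pos_iff.2 (good_ne_zero h x)
  have := norm_pos_iff.2 (good_ne_zero h y)
  positivity

theorem last_one {f : ℝ → ℝ} (hf : Continuous f) {s t : ℝ} (hst : s ≤ t) (h1 : 1 ≤ f s) (h2 : f t < 1) :
    ∃ s' ∈ Icc s t, f s' = 1 ∧ ∀ x ∈ Icc s' t, f x ≤ 1 := by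
  have hS : IsCompact (Icc s t ∩ {x | 1 ≤ f x}) := isCompact_Icc.inter_right (isClosed_le continuous_const hf)
  obtain ⟨s', hs', hmax⟩ := hS.exists_isGreatest ⟨s, ⟨le_rfl, hst⟩, h1⟩
  have hm : f s' = 1 := by
    obtain ⟨c, hc, hfc⟩ := intermediate_value_Icc' hs'.1.2 hf.continuousOn ⟨h2.le, hs'.2⟩
    have := hmax ⟨⟨hs'.1.1.trans hc.1, hc.2⟩, hfc.ge⟩
    rwa [← le_antisymm this hc.1]
  refine ⟨s', hs'.1, hm, fun x hx => ?_⟩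
  by_contra hcon
  push Not at hcon
  have := hmax ⟨⟨hs'.1.1.trans hx.1, hx.2⟩, hcon.le⟩
  have e : x = s' := le_antisymm this hx.1
  rw [e, hm] at hcon
  exact lt_irrefl _ hcon

theorem chord (h : Good Γ L) {s u t0 : ℝ} (hsu : s < u) (hL : u - s ≤ L) (hπ : Th Γ u - Th Γ s < π)
    (ht0 : t0 ∈ Icc s u) :
    dt (gt Γ s) (gt Γ u) ≤ dt (gt Γ t0) (gt Γ u) + dt (gt Γ s) (gt Γ t0) := by
  have hM := Th_mono h
  set A := gt Γ s with hA
  set B := gt Γ u with hB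
  have hD : 0 < dt A B := dt_gt_pos h hsu hπ
  set D := dt A B with hDdef
  have hc := gt_cont h
  by_contra hcon
  push Not at hcon
  let a : ℝ → ℝ := fun t => dt (gt Γ t) B / D
  let b : ℝ → ℝ := fun t => dt A (gt Γ t) / D
  have hrep : ∀ t, gt Γ t = a t • A + b t • B := by
    intro t
    have := dt_cramer A B (gt Γ t)
    rw [← hDdef] at this
    have h2 := congrArg (fun v => D⁻¹ • v) this
    simp only [smul_add, smul_smul, inv_mul_cancel₀ hD.ne', one_smul] at h2
    rw [h2]; simp only [a, b, div_eq_inv_mul]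
  have ac : Continuous a := by
    have := dt_cont.comp (hc.prodMk (continuous_const (y := B)))
    exact this.div_const _
  have bc : Continuous b := by
    have := dt_cont.comp ((continuous_const (y := A)).prodMk hc)
    exact this.div_const _
  have a0 : ∀ t ∈ Icc s u, 0 ≤ a t := fun t ht =>
    div_nonneg (dt_gt_nonneg (hM ht.2) (by linarith [hM ht.1])) hD.le
  have b0 : ∀ t ∈ Icc s u, 0 ≤ b t := fun t ht =>
    div_nonneg (dt_gt_nonneg (hM ht.1) (by linarith [hM ht.2])) hD.le
  have bu : b u = 1 := div_self hD.ne'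
  have au : a u = 0 := by simp only [a, ← hB, dt_self, zero_div]
  have as : a s = 1 := div_self hD.ne'
  have bs : b s = 0 := by simp only [b, ← hA, dt_self, zero_div]
  have lpos : ∀ t ∈ Icc s u, 0 < a t + b t := by
    intro t ht
    rcases ht.2.eq_or_lt with e | hlt
    · rw [e, bu, au]; norm_num
    · have : 0 < a t := div_pos (dt_gt_pos h hlt (by linarith [hM ht.1])) hD
      linarith [b0 t ht]
  have lt0 : a t0 + b t0 < 1 := by
    simp only [a, b]
    rw [← add_div, div_lt_one hD]; exact hcon
  have lc : Continuous (fun t => a t + b t) := ac.add bc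
  obtain ⟨s', hs', ls', hls⟩ := last_one lc ht0.1 (by simp only [as, bs]; norm_num) lt0
  obtain ⟨u'', hu'', lu', hlu⟩ := last_one (f := fun t => a (-t) + b (-t)) (lc.comp continuous_neg)
    (s := -u) (t := -t0) (by linarith [ht0.2]) (by simp only [neg_neg, au, bu]; norm_num)
    (by simpa only [neg_neg] using lt0)
  obtain ⟨u', rfl⟩ : ∃ u', u'' = -u' := ⟨-u'', by simp⟩
  simp only [neg_neg] at lu'
  have hu' : u' ∈ Icc t0 u := ⟨by linarith [hu''.2], by linarith [hu''.1]⟩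
  have hl1 : ∀ t ∈ Icc s' u', a t + b t ≤ 1 := by
    intro t ht
    rcases le_total t t0 with hh | hh
    · exact hls t ⟨ht.1, hh⟩
    · have := hlu (-t) ⟨by linarith [ht.2], by linarith⟩
      simpa only [neg_neg] using this
  have hsu' : s' ≤ u' := hs'.2.trans hu'.1
  have sub : ∀ t ∈ Icc s' u', t ∈ Icc s u := fun t ht => ⟨hs'.1.trans ht.1, ht.2.trans hu'.2⟩
  have hz : ∀ t ∈ Icc s' u', pol (‖Γ t‖ / (a t + b t)) (Th Γ t) = A + (b t / (a t + b t)) • (B - A) := by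
    intro t ht
    have hl := lpos t (sub t ht)
    have e1 : pol (‖Γ t‖ / (a t + b t)) (Th Γ t) = (a t + b t)⁻¹ • gt Γ t := by
      simp only [pol, gt, smul_smul, div_eq_inv_mul]
    rw [e1, hrep t, smul_add, smul_smul, smul_smul, smul_sub]
    have e2 : (a t + b t)⁻¹ * a t = 1 - b t / (a t + b t) := by field_simp; ring
    rw [e2, sub_smul, one_smul, div_eq_inv_mul]
    abel
  have hlen := radial_len h hsu' (by linarith [hs'.1, hu'.2]) (ρ := fun t => ‖Γ t‖ / (a t + b t))
    (P := fun t => (b t / (a t + b t)) * ‖B - A‖) ?_ ?_ ?_ ?_ ?_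
  rotate_left
  · exact h.lip.continuous.norm.continuousOn.div lc.continuousOn (fun t ht => (lpos t (sub t ht)).ne')
  · intro t ht
    have := lpos t (sub t ht)
    rw [le_div_iff₀ this]
    nlinarith [hl1 t ht, norm_nonneg (Γ t)]
  · simp only [ls', div_one]
  · simp only [lu', div_one]
  · intro x y hx hxy hy
    have hx' : x ∈ Icc s' u' := ⟨hx, hxy.trans hy⟩
    have hy' : y ∈ Icc s' u' := ⟨hx.trans hxy, hy⟩
    rw [hz x hx', hz y hy', dist_comm, dist_eq_norm, add_sub_add_left_eq_sub, ← sub_smul, norm_smul, ← sub_mul]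
    have hmon : b x / (a x + b x) ≤ b y / (a y + b y) := by
      rw [div_le_div_iff₀ (lpos x (sub x hx')) (lpos y (sub y hy'))]
      have h1 : 0 ≤ dt (gt Γ x) (gt Γ y) :=
        dt_gt_nonneg (hM hxy) (by linarith [hM (sub x hx').1, hM (sub y hy').2])
      rw [hrep x, hrep y, dt_lin_left, dt_lin_right, dt_lin_right, dt_self, dt_self,
        show dt B A = -D by simp only [hDdef, dt]; ring] at h1
      have h2 : 0 ≤ D * (a x * b y - b x * a y) := by linarith
      have := nonneg_of_mul_nonneg_right h2 hD
      linarith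
    rw [Real.norm_eq_abs, abs_of_nonneg (by linarith)]
  simp only [ls', lu', div_one] at hlen
  have e3 : dist (gt Γ s') (gt Γ u') = |b u' - b s'| * ‖B - A‖ := by
    rw [dist_comm, dist_eq_norm, hrep u', hrep s', ← Real.norm_eq_abs, ← norm_smul]
    congr 1
    rw [show a u' = 1 - b u' by linarith, show a s' = 1 - b s' by linarith]
    module
  have d1 := gt_lip h hs'.2
  have d2 := gt_lip h hu'.1
  have d3 : (b u' - b s') * ‖B - A‖ ≤ |b u' - b s'| * ‖B - A‖ := by gcongr; exact le_abs_self _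
  have d4 := dist_triangle (gt Γ s') (gt Γ t0) (gt Γ u')
  have d5 : dist (gt Γ s') (gt Γ t0) + dist (gt Γ t0) (gt Γ u') = dist (gt Γ s') (gt Γ u') := by
    apply le_antisymm _ d4
    rw [e3]; linarith
  obtain ⟨r, -, hr⟩ := dist_add_dist_eq_iff.1 d5
  rw [AffineMap.lineMap_apply_module] at hr
  have e4 : a t0 + b t0 = (1 - r) * (a s' + b s') + r * (a u' + b u') := by
    simp only [a, b]
    rw [← hr, dt_lin_left, dt_lin_right]; ring
  simp only [ls', lu'] at e4
  linarith
end


section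
variable {Γ : ℝ → E3} {L : ℝ}

def body (Γ : ℝ → E3) (s u : ℝ) : Set E2 := (fun p : ℝ × ℝ => p.1 • gt Γ p.2) '' (Icc 0 1 ×ˢ Icc s u)

theorem mem_body {s u : ℝ} {v : E2} :
    v ∈ body Γ s u ↔ ∃ l ∈ Icc (0:ℝ) 1, ∃ t ∈ Icc s u, l • gt Γ t = v := by
  constructor
  · rintro ⟨⟨l, t⟩, ⟨hl, ht⟩, rfl⟩
    exact ⟨l, hl, t, ht, rfl⟩
  · rintro ⟨l, hl, t, ht, rfl⟩
    exact ⟨⟨l, t⟩, ⟨hl, ht⟩, rfl⟩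

theorem body_compact (h : Good Γ L) (s u : ℝ) : IsCompact (body Γ s u) := by
  apply (isCompact_Icc.prod isCompact_Icc).image
  have := gt_cont h
  fun_prop

theorem gt_mem_body {s u t : ℝ} (ht : t ∈ Icc s u) : gt Γ t ∈ body Γ s u :=
  mem_body.2 ⟨1, by simp, t, ht, one_smul _ _⟩

theorem body_tri (h : Good Γ L) {s u t₁ t₂ x y : ℝ} (hL : u - s ≤ L) (hπ : Th Γ u - Th Γ s < π)
    (h1 : s ≤ t₁) (h12 : t₁ ≤ t₂) (h2 : t₂ ≤ u) (hx : 0 ≤ x) (hy : 0 ≤ y) (hxy : x + y ≤ 1) :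
    x • gt Γ t₁ + y • gt Γ t₂ ∈ body Γ s u := by
  have hM := Th_mono h
  rw [mem_body]
  rcases h12.eq_or_lt with e | hlt
  · subst e
    exact ⟨x + y, ⟨by linarith, hxy⟩, t₁, ⟨h1, h2⟩, add_smul _ _ _⟩
  have hπ' : Th Γ t₂ - Th Γ t₁ < π := by linarith [hM h1, hM h2]
  have hD := dt_gt_pos h hlt hπ'
  set A := gt Γ t₁ with hA
  set B := gt Γ t₂ with hB
  set D := dt A B with hDdef
  have hBA : dt B A = -D := by simp only [hDdef, dt]; ring
  have hfc : Continuous (fun t => dt (gt Γ t) (x • A + y • B)) :=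
    dt_cont.comp ((gt_cont h).prodMk (continuous_const (y := x • A + y • B)))
  have hf2 : dt (gt Γ t₂) (x • A + y • B) ≤ 0 := by
    rw [← hB, dt_lin_right, dt_self, hBA]; nlinarith
  have hf1 : 0 ≤ dt (gt Γ t₁) (x • A + y • B) := by
    rw [← hA, dt_lin_right, dt_self, ← hDdef]; nlinarith
  have h0mem : (0:ℝ) ∈ Icc (dt (gt Γ t₂) (x • A + y • B)) (dt (gt Γ t₁) (x • A + y • B)) := ⟨hf2, hf1⟩
  obtain ⟨t, ht, hft⟩ := intermediate_value_Icc' h12 hfc.continuousOn h0mem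
  have hch := chord h hlt (by linarith) hπ' ht
  have ha : 0 ≤ dt (gt Γ t) B := dt_gt_nonneg (hM ht.2) (by linarith [hM ht.1])
  have hb : 0 ≤ dt A (gt Γ t) := dt_gt_nonneg (hM ht.1) (by linarith [hM ht.2])
  have hrep := dt_cramer A B (gt Γ t)
  rw [← hA, ← hB, ← hDdef] at hch
  rw [← hDdef] at hrep
  set a := dt (gt Γ t) B
  set b := dt A (gt Γ t)
  have hrep2 : gt Γ t = (a / D) • A + (b / D) • B := by
    have h2 := congrArg (fun v => D⁻¹ • v) hrep
    simp only [smul_add, smul_smul, inv_mul_cancel₀ hD.ne', one_smul] at h2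
    rw [h2]; simp only [div_eq_inv_mul]
  have hab : 0 < a + b := by linarith
  have e1 : a * y = b * x := by
    simp only at hft
    rw [hrep2, dt_lin_left, dt_lin_right, dt_lin_right, dt_self, dt_self, hBA, ← hDdef] at hft
    field_simp at hft
    have h3 : D * (a * y - b * x) = 0 := by linarith
    have := (mul_eq_zero.1 h3).resolve_left hD.ne'
    linarith
  refine ⟨(x + y) * D / (a + b), ⟨by positivity, ?_⟩, t, ⟨h1.trans ht.1, ht.2.trans h2⟩, ?_⟩
  · rw [div_le_one hab]; nlinarith
  · rw [hrep2, smul_add, smul_smul, smul_smul]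
    congr 2
    · field_simp; linarith
    · field_simp; linarith

theorem body_convex (h : Good Γ L) {s u : ℝ} (hL : u - s ≤ L) (hπ : Th Γ u - Th Γ s < π) :
    Convex ℝ (body Γ s u) := by
  intro p hp q hq c d hc hd hcd
  obtain ⟨l, hl, t, ht, rfl⟩ := mem_body.1 hp
  obtain ⟨k, hk, r, hr, rfl⟩ := mem_body.1 hq
  rw [smul_smul, smul_smul]
  have h1 : 0 ≤ c * l := mul_nonneg hc hl.1
  have h2 : 0 ≤ d * k := mul_nonneg hd hk.1
  have h3 : c * l + d * k ≤ 1 := by nlinarith [hl.2, hk.2]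
  rcases le_total t r with hh | hh
  · exact body_tri h hL hπ ht.1 hh hr.2 h1 h2 h3
  · rw [add_comm]
    exact body_tri h hL hπ hr.1 hh ht.2 h2 h1 (by linarith)

theorem body_interior (h : Good Γ L) {s u : ℝ} (hsu : s < u) (hL : u - s ≤ L) (hπ : Th Γ u - Th Γ s < π) :
    (interior (body Γ s u)).Nonempty := by
  have hD := dt_gt_pos h hsu hπ
  set A := gt Γ s with hA
  set B := gt Γ u with hB
  set D := dt A B with hDdef
  have c1 : Continuous (fun v => dt v B) := dt_cont.comp (continuous_id.prodMk (continuous_const (y := B)))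
  have c2 : Continuous (fun v => dt A v) := dt_cont.comp ((continuous_const (y := A)).prodMk continuous_id)
  let O : Set E2 := {v | 0 < dt v B} ∩ ({v | 0 < dt A v} ∩ {v | dt v B + dt A v < D})
  have hO : IsOpen O := (isOpen_lt continuous_const c1).inter
    ((isOpen_lt continuous_const c2).inter (isOpen_lt (c1.add c2) continuous_const))
  have hsub : O ⊆ body Γ s u := by
    rintro v ⟨h1, h2, h3⟩
    simp only [mem_ofPred_eq] at h1 h2 h3
    have hrep := dt_cramer A B v
    rw [← hDdef] at hrep
    have h4 := congrArg (fun v => D⁻¹ • v) hrep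
    simp only [smul_add, smul_smul, inv_mul_cancel₀ hD.ne', one_smul] at h4
    rw [h4]
    refine body_tri h hL hπ le_rfl hsu.le le_rfl (by positivity) (by positivity) ?_
    rw [← mul_add, inv_mul_le_iff₀ hD]; linarith
  refine ⟨(1/4:ℝ) • A + (1/4:ℝ) • B, interior_mono hsub (hO.interior_eq.symm ▸ ?_)⟩
  refine ⟨?_, ?_, ?_⟩ <;> simp only [mem_ofPred_eq, dt_lin_left, dt_lin_right, dt_self, ← hDdef] <;> linarith

theorem gt_ne_zero (h : Good Γ L) (t : ℝ) : gt Γ t ≠ 0 := by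
  intro e
  have e0 := congrArg (fun v : E2 => v 0) e
  have e1 := congrArg (fun v : E2 => v 1) e
  simp only [gt, pol_zero, pol_one, PiLp.zero_apply] at e0 e1
  have h0 := norm_pos_iff.2 (good_ne_zero h t)
  have := Real.sin_sq_add_cos_sq (Th Γ t)
  have h1 := (mul_eq_zero.1 e0).resolve_left h0.ne'
  have h2 := (mul_eq_zero.1 e1).resolve_left h0.ne'
  rw [h1, h2] at this
  norm_num at this

theorem dt_gt_eq (h : Good Γ L) {s u x y : ℝ} (hπ : Th Γ u - Th Γ s < π) (hx : x ∈ Icc s u) (hy : y ∈ Icc s u)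
    (e : dt (gt Γ x) (gt Γ y) = 0) : x = y := by
  have hM := Th_mono h
  rcases lt_trichotomy x y with hh | hh | hh
  · have := dt_gt_pos h hh (by linarith [hM hx.1, hM hy.2])
    linarith
  · exact hh
  · have := dt_gt_pos h hh (by linarith [hM hy.1, hM hx.2])
    simp only [dt] at this e
    linarith

theorem gt_not_interior (h : Good Γ L) {s u t : ℝ} (hπ : Th Γ u - Th Γ s < π) (ht : t ∈ Icc s u) :
    gt Γ t ∉ interior (body Γ s u) := by
  intro hi
  have hc : Filter.Tendsto (fun e : ℝ => (1 + e) • gt Γ t) (nhdsWithin 0 (Ioi 0)) (nhds (gt Γ t)) := by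
    have : Continuous (fun e : ℝ => (1 + e) • gt Γ t) := by fun_prop
    have := this.tendsto 0
    simp only [add_zero, one_smul] at this
    exact this.mono_left nhdsWithin_le_nhds
  have h1 := hc.eventually (mem_interior_iff_mem_nhds.1 hi)
  obtain ⟨e, he, he0⟩ := (h1.and self_mem_nhdsWithin).exists
  obtain ⟨l, hl, t', ht', hE⟩ := mem_body.1 he
  have he0 : 0 < e := he0
  have h2 : dt (gt Γ t) (l • gt Γ t') = 0 := by
    rw [hE]
    have := dt_lin_right (1 + e) 0 (gt Γ t) (gt Γ t) (gt Γ t)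
    rw [zero_smul, add_zero, dt_self] at this
    linarith
  have h3 : l * dt (gt Γ t) (gt Γ t') = 0 := by
    have := dt_lin_right l 0 (gt Γ t') (gt Γ t') (gt Γ t)
    rw [zero_smul, add_zero, h2] at this
    linarith
  rcases mul_eq_zero.1 h3 with h4 | h4
  · rw [h4, zero_smul] at hE
    rcases smul_eq_zero.1 hE.symm with h5 | h5
    · linarith
    · exact gt_ne_zero h t h5
  · have := dt_gt_eq h hπ ht ht' h4
    subst this
    have h5 : (1 + e - l) • gt Γ t = 0 := by rw [sub_smul, hE, sub_self]
    rcases smul_eq_zero.1 h5 with h5 | h5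
    · linarith [hl.2]
    · exact gt_ne_zero h t h5

theorem good_local (h : Good Γ L) (t0 : ℝ) : ∃ δ > 0, InjOn (gt Γ) (Icc (t0 - δ) (t0 + δ)) ∧
    (∃ K : Set E2, Convex ℝ K ∧ IsCompact K ∧ (interior K).Nonempty ∧
      gt Γ '' Icc (t0 - δ) (t0 + δ) ⊆ frontier K) ∧
    ∃ w : E2, ∃ c : ℝ, 0 < c ∧ ⟪w, gt Γ t0⟫ = c ∧ ∀ t ∈ Icc (t0 - δ) (t0 + δ), ⟪w, gt Γ t⟫ ≤ c := by
  obtain ⟨m0, hm0, hr⟩ := good_m0 h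
  have hM := Th_mono h
  obtain ⟨δ, hδ, hδL, hδm⟩ : ∃ δ > 0, δ ≤ L / 2 ∧ δ ≤ m0 :=
    ⟨min (L/2) m0, lt_min (by linarith [h.pos]) hm0, min_le_left _ _, min_le_right _ _⟩
  have hsu : t0 - δ < t0 + δ := by linarith
  have hπ : Th Γ (t0 + δ) - Th Γ (t0 - δ) < π := by
    have h1 := Th_lip h hsu.le hm0 hr
    have h2 : (t0 + δ - (t0 - δ)) / m0 ≤ 2 := by rw [div_le_iff₀ hm0]; linarith
    linarith [Real.pi_gt_three]
  have hL : t0 + δ - (t0 - δ) ≤ L := by linarith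
  have hcv := body_convex h hL hπ
  have hcp := body_compact h (t0 - δ) (t0 + δ)
  have hin := body_interior h hsu hL hπ
  have ht0 : t0 ∈ Icc (t0 - δ) (t0 + δ) := ⟨by linarith, by linarith⟩
  have hs : t0 - δ ∈ Icc (t0 - δ) (t0 + δ) := ⟨by linarith, by linarith⟩
  have hu : t0 + δ ∈ Icc (t0 - δ) (t0 + δ) := ⟨by linarith, by linarith⟩
  refine ⟨δ, hδ, ?_, ⟨_, hcv, hcp, hin, ?_⟩, ?_⟩
  · intro x hx y hy e
    exact dt_gt_eq h hπ hx hy (by rw [e, dt_self])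
  · rintro _ ⟨t, ht, rfl⟩
    exact ⟨subset_closure (gt_mem_body ht), gt_not_interior h hπ ht⟩
  · obtain ⟨f, hf⟩ := geometric_hahn_banach_open_point hcv.interior isOpen_interior (gt_not_interior h hπ ht0)
    have hle : ∀ z ∈ body Γ (t0 - δ) (t0 + δ), f z ≤ f (gt Γ t0) := by
      intro z hz
      have h1 : z ∈ closure (interior (body Γ (t0 - δ) (t0 + δ))) := by
        rw [hcv.closure_interior_eq_closure_of_nonempty_interior hin]
        exact subset_closure hz
      have hcl : IsClosed {z | f z ≤ f (gt Γ t0)} := isClosed_le f.continuous continuous_const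
      exact closure_minimal (fun a ha => (hf a ha).le) hcl h1
    have h0 : 0 ≤ f (gt Γ t0) := by
      have := hle 0 (mem_body.2 ⟨0, by simp, t0, ht0, zero_smul _ _⟩)
      simpa using this
    have hpos : 0 < f (gt Γ t0) := by
      refine lt_of_le_of_ne h0 fun e => ?_
      have hA := hle _ (gt_mem_body hs)
      have hB := hle _ (gt_mem_body hu)
      rw [← e] at hA hB
      have hc := congrArg f (dt_cramer (gt Γ (t0 - δ)) (gt Γ (t0 + δ)) (gt Γ t0))
      have d1 : 0 < dt (gt Γ t0) (gt Γ (t0 + δ)) := dt_gt_pos h (by linarith) (by linarith [hM hs.1, hM ht0.1])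
      have d2 : 0 < dt (gt Γ (t0 - δ)) (gt Γ t0) := dt_gt_pos h (by linarith) (by linarith [hM ht0.2])
      have d3 := dt_gt_pos h hsu hπ
      simp only [map_add, map_smul, smul_eq_mul, ← e] at hc
      have hA0 : f (gt Γ (t0 - δ)) = 0 := by nlinarith
      have hB0 : f (gt Γ (t0 + δ)) = 0 := by nlinarith
      obtain ⟨z, hz⟩ := hin
      have hz1 := hf z hz
      have hc2 := congrArg f (dt_cramer (gt Γ (t0 - δ)) (gt Γ (t0 + δ)) z)
      simp only [map_add, map_smul, smul_eq_mul, hA0, hB0, mul_zero, add_zero] at hc2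
      have := (mul_eq_zero.1 hc2).resolve_left d3.ne'
      linarith
    refine ⟨(InnerProductSpace.toDual ℝ E2).symm f, f (gt Γ t0), hpos, ?_, fun t ht => ?_⟩
    · rw [InnerProductSpace.toDual_symm_apply]
    · rw [InnerProductSpace.toDual_symm_apply]
      exact hle _ (gt_mem_body ht)
end


theorem speed_dist {a b : ℝ} {γ : ℝ → E3} {C : ℝ≥0} (hs : HasConstantSpeedOnWith γ (Set.Icc a b) C)
    {x y : ℝ} (hx : a ≤ x) (hxy : x ≤ y) (hy : y ≤ b) : dist (γ x) (γ y) ≤ C * (y - x) := by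
  have h1 := hs ⟨hx, hxy.trans hy⟩ ⟨hx.trans hxy, hy⟩
  have h2 := eVariationOn.edist_le γ (s := Icc a b ∩ Icc x y)
    (x := x) (y := y) ⟨⟨hx, hxy.trans hy⟩, le_rfl, hxy⟩ ⟨⟨hx.trans hxy, hy⟩, hxy, le_rfl⟩
  rw [h1, edist_dist] at h2
  exact (ENNReal.ofReal_le_ofReal_iff (mul_nonneg C.2 (sub_nonneg.2 hxy))).1 h2

theorem speed_pos {a b : ℝ} {γ : ℝ → E3} {C : ℝ≥0} (hmin : IsMinimalInspection a b γ)
    (hs : HasConstantSpeedOnWith γ (Set.Icc a b) C) : 0 < (C : ℝ) := by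
  obtain ⟨⟨hab, -, -, -, hh⟩, -⟩ := hmin
  refine lt_of_le_of_ne C.2 fun e => ?_
  have hc : ∀ t ∈ Icc a b, γ t = γ a := by
    intro t ht
    have := speed_dist hs le_rfl ht.1 ht.2
    rw [show (C:ℝ) = 0 from e.symm, zero_mul] at this
    exact (dist_le_zero.1 this).symm
  have key : ∀ y : E3, ‖y‖ = 1 → 1 ≤ ⟪γ a, y⟫ := by
    intro y hy
    obtain ⟨_, ⟨t, ht, rfl⟩, h1⟩ := support_of_hull hh hy
    rwa [hc t ht] at h1
  have hy : ‖(EuclideanSpace.single 0 1 : E3)‖ = 1 := by simp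
  have h1 := key _ hy
  have h2 := key (-(EuclideanSpace.single 0 1 : E3)) (by rw [norm_neg, hy])
  rw [inner_neg_right] at h2
  linarith

def perExt (γ : ℝ → E3) (a C : ℝ) {L : ℝ} (hL : 0 < L) (t : ℝ) : E3 := γ (a + toIcoMod hL 0 t / C)

theorem perExt_eq {a b C L : ℝ} {γ : ℝ → E3} (hC : 0 < C) (hL : 0 < L) (e : L = C * (b - a)) (hab : γ a = γ b)
    {t : ℝ} (ht : t ∈ Icc 0 L) : perExt γ a C hL t = γ (a + t / C) := by
  unfold perExt
  rcases ht.2.eq_or_lt with h1 | h1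
  · have e2 : a + L / C = b := by rw [e]; field_simp; ring
    have : toIcoMod hL 0 t = 0 := by
      rw [h1]
      have := toIcoMod_add_right hL 0 0
      rw [zero_add, toIcoMod_apply_left] at this
      exact this
    rw [this, h1, e2, zero_div, add_zero, hab]
  · rw [(toIcoMod_eq_self hL).2 ⟨ht.1, by simpa using h1⟩]

theorem perExt_per {a C L : ℝ} {γ : ℝ → E3} (hL : 0 < L) : Function.Periodic (perExt γ a C hL) L := by
  intro t
  simp only [perExt, toIcoMod_add_right]

theorem perExt_good {a b : ℝ} {γ : ℝ → E3} {C : ℝ≥0} {L : ℝ} (hC : 0 < (C:ℝ)) (hL : 0 < L)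
    (e : L = C * (b - a)) (hmin : IsMinimalInspection a b γ)
    (hs : HasConstantSpeedOnWith γ (Set.Icc a b) C) : Good (perExt γ a C hL) L := by
  have hp : Function.Periodic (perExt γ a C hL) L := perExt_per hL
  have hclos := hmin.1.2.2.1
  have hE := fun t ht => perExt_eq (t := t) hC hL e hclos ht
  have hab := hmin.1.1
  have eb : a + L / C = b := by rw [e]; field_simp; ring
  have hd : ∀ x y, 0 ≤ x → x ≤ y → y ≤ L → dist (perExt γ a C hL x) (perExt γ a C hL y) ≤ y - x := by
    intro x y hx hxy hy
    rw [hE x ⟨hx, hxy.trans hy⟩, hE y ⟨hx.trans hxy, hy⟩]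
    have h1 : x / C ≤ y / C := by gcongr
    have h2 : y / C ≤ L / C := by gcongr
    have h3 : 0 ≤ x / C := by positivity
    refine (speed_dist hs (by linarith) (by linarith) (by linarith)).trans (le_of_eq ?_)
    field_simp; ring
  have hd2 : ∀ x y, x ≤ y → y - x ≤ L → dist (perExt γ a C hL x) (perExt γ a C hL y) ≤ y - x := by
    intro x y hxy hyx
    set k := toIcoDiv hL 0 x
    rw [← hp.sub_zsmul_eq k (x := x), ← hp.sub_zsmul_eq k (x := y)]
    have hm := toIcoMod_mem_Ico hL 0 x
    have h0 : toIcoMod hL 0 x = x - k • L := rfl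
    rw [h0, zero_add] at hm
    rw [show y - x = (y - k • L) - (x - k • L) by ring] at hyx ⊢
    have hxy' : x - k • L ≤ y - k • L := by linarith
    generalize x - k • L = x' at *
    generalize y - k • L = y' at *
    rcases le_total y' L with h1 | h1
    · exact hd _ _ hm.1 hxy' h1
    · have d1 := hd x' L hm.1 hm.2.le le_rfl
      have d2 := hd 0 (y' - L) le_rfl (by linarith) (by linarith [hm.2])
      have e0 := hp 0
      rw [zero_add] at e0
      rw [hp.sub_eq, ← e0] at d2
      have := dist_triangle (perExt γ a C hL x') (perExt γ a C hL L) (perExt γ a C hL y')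
      linarith
  refine ⟨hL, hp, ?_, ?_, ?_⟩
  · have hd3 : ∀ x y, x ≤ y → dist (perExt γ a C hL x) (perExt γ a C hL y) ≤ y - x := fun x y hxy =>
      local_to_global (P := fun t => t) hL (fun x y _ hxy _ hy => hd2 x y hxy hy) x y le_rfl hxy le_rfl
    refine LipschitzWith.of_dist_le_mul fun x y => ?_
    rw [NNReal.coe_one, one_mul]
    rcases le_total x y with hxy | hxy
    · rw [Real.dist_eq, abs_sub_comm, abs_of_nonneg (by linarith)]
      exact hd3 x y hxy
    · rw [dist_comm, Real.dist_eq, abs_of_nonneg (by linarith)]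
      exact hd3 y x hxy
  · intro y hy
    obtain ⟨_, ⟨t, ht, rfl⟩, h1⟩ := support_of_hull hmin.1.2.2.2.2 hy
    refine ⟨C * (t - a), ?_⟩
    rw [hE _ ⟨mul_nonneg hC.le (by linarith [ht.1]), by rw [e]; gcongr; exact ht.2⟩]
    rwa [show a + C * (t - a) / C = t by field_simp; ring]
  · intro c d β hβ
    have h1 := hmin.2 c d β hβ
    have h2 := hs (left_mem_Icc.2 hab.le) (right_mem_Icc.2 hab.le)
    rw [inter_self, ← e] at h2
    rwa [h2] at h1

theorem unfolding_eq {a b : ℝ} {γ : ℝ → E3} {C : ℝ≥0} {L : ℝ} (hC : 0 < (C:ℝ)) (hL : 0 < L)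
    (e : L = C * (b - a)) (hmin : IsMinimalInspection a b γ)
    (hs : HasConstantSpeedOnWith γ (Set.Icc a b) C) {t : ℝ} (ht : t ∈ Icc a b) :
    unfolding a γ t = gt (perExt γ a C hL) (C * (t - a)) := by
  have hg := perExt_good hC hL e hmin hs
  have hE : ∀ s ∈ Icc a b, perExt γ a C hL (C * (s - a)) = γ s := by
    intro s hs
    rw [perExt_eq hC hL e hmin.1.2.2.1 ⟨mul_nonneg hC.le (by linarith [hs.1]), by rw [e]; gcongr; exact hs.2⟩]
    congr 1; field_simp; ring
  have hT : sphericalArc a γ t = Th (perExt γ a C hL) (C * (t - a)) := by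
    have h0 : 0 ≤ C * (t - a) := mul_nonneg hC.le (by linarith [ht.1])
    have h1 := Th_sub_eq hg h0
    have h2 : Th (perExt γ a C hL) 0 = 0 := variationOnFromTo.self _ _ _
    rw [h2, sub_zero] at h1
    rw [h1, sphericalArc]
    congr 1
    have hm : Monotone (fun s : ℝ => (C:ℝ) * (s - a)) := fun x y hxy => by
      simp only; gcongr
    have him : (fun s : ℝ => (C:ℝ) * (s - a)) '' Icc a t = Icc 0 (C * (t - a)) := by
      ext v
      constructor
      · rintro ⟨s, hs, rfl⟩
        exact ⟨mul_nonneg hC.le (by linarith [hs.1]), hm hs.2⟩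
      · intro hv
        refine ⟨a + v / C, ⟨?_, ?_⟩, ?_⟩
        · have := div_nonneg hv.1 hC.le
          linarith
        · have : v / C ≤ t - a := by rw [div_le_iff₀ hC]; linarith [hv.2]
          linarith
        · simp only; field_simp; ring
    rw [← him, ← eVariationOn.comp_eq_of_monotoneOn _ _ (hm.monotoneOn _)]
    apply eVariationOn.eq_of_eqOn
    intro s hs
    simp only [Function.comp, hatG]
    rw [hE s ⟨hs.1, hs.2.trans ht.2⟩]
  unfold unfolding gt pol
  rw [hT, hE t ht]

theorem minimal_inspection_unfolding_locally_convex
    (a b : ℝ) (γ : ℝ → E3) (C : ℝ≥0)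
    (hmin : IsMinimalInspection a b γ)
    (hspeed : HasConstantSpeedOnWith γ (Set.Icc a b) C) :
    IsLocallyConvexWrtO a b (unfolding a γ) := by
  have hC := speed_pos hmin hspeed
  have hab := hmin.1.1
  have hL : 0 < C * (b - a) := mul_pos hC (by linarith)
  have hg := perExt_good hC hL rfl hmin hspeed
  have hU := fun t ht => unfolding_eq (t := t) hC hL rfl hmin hspeed ht
  have key : ∀ t ∈ Icc a b, ∃ U ∈ nhdsWithin t (Set.Icc a b), InjOn (unfolding a γ) U ∧
      (∃ K : Set E2, Convex ℝ K ∧ IsCompact K ∧ (interior K).Nonempty ∧ unfolding a γ '' U ⊆ frontier K) ∧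
      ∃ w : E2, ∃ c : ℝ, 0 < c ∧ ⟪w, unfolding a γ t⟫ = c ∧ ∀ s ∈ U, ⟪w, unfolding a γ s⟫ ≤ c := by
    intro t ht
    obtain ⟨δ, hδ, hinj, ⟨K, k1, k2, k3, k4⟩, w, c, hc, hw, hle⟩ := good_local hg (C * (t - a))
    refine ⟨Icc a b ∩ (fun s : ℝ => (C:ℝ) * (s - a)) ⁻¹' Icc (C * (t - a) - δ) (C * (t - a) + δ), ?_, ?_,
      ⟨K, k1, k2, k3, ?_⟩, w, c, hc, ?_, ?_⟩
    · refine Filter.inter_mem self_mem_nhdsWithin (mem_nhdsWithin_of_mem_nhds ?_)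
      have : Continuous (fun s : ℝ => (C:ℝ) * (s - a)) := by fun_prop
      exact this.continuousAt.preimage_mem_nhds (Icc_mem_nhds (by linarith) (by linarith))
    · intro x hx y hy hxy
      rw [hU x hx.1, hU y hy.1] at hxy
      have := hinj hx.2 hy.2 hxy
      simp only at this
      have := mul_left_cancel₀ hC.ne' this
      linarith
    · rintro _ ⟨s, hs, rfl⟩
      rw [hU s hs.1]
      exact k4 ⟨_, hs.2, rfl⟩
    · rw [hU t ht]; exact hw
    · intro s hs
      rw [hU s hs.1]
      exact hle _ hs.2
  refine ⟨fun t ht => ?_, fun t ht => ?_, fun t ht => ?_⟩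
  · obtain ⟨U, h1, h2, -⟩ := key t ht
    exact ⟨U, h1, h2⟩
  · obtain ⟨U, h1, -, ⟨K, k⟩, -⟩ := key t ht
    exact ⟨U, h1, K, k⟩
  · obtain ⟨U, h1, -, -, w, c, h2, h3, h4⟩ := key t ht
    exact ⟨w, c, h2, h3, U, h1, h4⟩
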